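/- Let (A, ι) and (B, ζ) be 𝒦-algebras and let X be an A–B Hilbert bimodule. Then the C(A,ι)–C(B,ζ) Hilbert bimodule C(X, ι, ζ) is right-full (respectively, left-full) if and only if X is right-full (respectively, left-full); in particular C(X, ι, ζ) is an imprimitivity bimodule if and only if X is. -/

import Mathlib

/-!
A `𝒦`-algebra `(B, ζ)` carries matrix units `f i j = ζ(u i j)` in `M(B)` with `∑ f i i = 1` strictly,
so `B` is an algebra of infinite matrices over its corner `f₀₀ B f₀₀`, and `d ↦ d f₀₀` identifies
`C(B, ζ)` isometrically with that corner.  The inverse is infinite amplification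
`c ↦ ∑ f i 0 * c * f 0 i` (`exists_relComm_of_corner`, `norm_le_corner`).  The bimodule behaves in the
same way: with `e i j = ι(u i j)`, the map `m ↦ m f₀₀ = e₀₀ m` takes `C(X, ι, ζ)` onto `e₀₀ X f₀₀`,
again with amplification as an inverse (`exists_bimodRelComm_of_corner`).

Fullness is compared on corners (`full_iff_of_corner`).  If `C(X, ι, ζ)` is full, every block
`f i i * b * f j j` of `b ∈ B` is a translate `f i 0 * d * f 0 j` with `d ∈ C(B, ζ)`, and for
`d = ⟨m, m'⟩` this is the inner product `⟨m f 0 i, m' f 0 j⟩` of elements of `X`.  If `X` is full, an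
element `d` of `C(B, ζ)` is approximated once its corner is, and the corner of `⟨x, y⟩` is the limit
of the sums `∑ ⟨e 0 j x f₀₀, e 0 j y f₀₀⟩` of inner products of elements of `e₀₀ X f₀₀`, hence of
corners of inner products of `C(X, ι, ζ)`.  The left-hand statement is the mirror image.

Amplifications in `M(X)` are built from adjointable maps `B → X` as pointwise limits of the truncated
amplifications.  The norm on `M(X)` is not assumed to be related to that on `X`, so all estimates are
made in `X`, `M(A)` and `M(B)`.
-/

open scoped MultiplierAlgebra

noncomputable section

/-! ## Framework

`𝓜(ℂ, A)` is the multiplier algebra `M(A)` of a (non-unital) C⋆-algebra `A`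
(Mathlib's `DoubleCentralizer`), and `(a : 𝓜(ℂ, A))` is the canonical image of `a : A`
in it. -/

/-- A system of matrix units `{u i j}` (indexed by `ℕ`) in a non-unital C⋆-algebra `K`,
whose linear span is dense.  A C⋆-algebra carrying such a system is precisely (i.e., is
⋆-isomorphic to) the C⋆-algebra `𝒦` of compact operators on a separable
infinite-dimensional Hilbert space. -/
structure MatrixUnits (K : Type*) [NonUnitalCStarAlgebra K] where
  u : ℕ → ℕ → K
  u_ne_zero : ∀ i j, u i j ≠ 0
  u_mul : ∀ i j k l, u i j * u k l = if j = k then u i l else 0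
  star_u : ∀ i j, star (u i j) = u j i
  dense_span : Dense (Submodule.span ℂ (Set.range fun p : ℕ × ℕ => u p.1 p.2) : Set K)

/-- `K` is (a copy of) the C⋆-algebra `𝒦` of compact operators on a separable
infinite-dimensional Hilbert space. -/
def IsCompactOperatorsAlgebra (K : Type*) [NonUnitalCStarAlgebra K] : Prop :=
  Nonempty (MatrixUnits K)

/-- A homomorphism `φ : A → M(B)` is *nondegenerate* if `φ(A)·B` is dense in `B`. -/
def Nondegenerate {A B : Type*} [NonUnitalCStarAlgebra A] [NonUnitalCStarAlgebra B]
    (φ : A →⋆ₙₐ[ℂ] 𝓜(ℂ, B)) : Prop :=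
  ∀ b : B, (b : 𝓜(ℂ, B)) ∈
    closure (Submodule.span ℂ {x : 𝓜(ℂ, B) | ∃ (a : A) (c : B), x = φ a * c} : Set 𝓜(ℂ, B))

/-- The `A`-relative commutant `C(A, ι) = {a ∈ M(A) : ι(k)·a = a·ι(k) ∈ A for all k ∈ K}`
of a `K`-algebra `(A, ι)`. -/
def relComm {K A : Type*} [NonUnitalCStarAlgebra K] [NonUnitalCStarAlgebra A]
    (ι : K →⋆ₙₐ[ℂ] 𝓜(ℂ, A)) : Set 𝓜(ℂ, A) :=
  {a | ∀ k : K, ι k * a = a * ι k ∧ a * ι k ∈ Set.range ((↑) : A → 𝓜(ℂ, A))}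

/-- An `A`–`B` Hilbert bimodule: a right Hilbert `B`-module and a left Hilbert
`A`-module satisfying the compatibility condition `⟨x, y⟩_A · z = x · ⟨y, z⟩_B`.
The right inner product `innerR x y = ⟨x, y⟩_B` is linear in the second variable, and
the left inner product `innerL x y = ⟨x, y⟩_A` is linear in the first variable. -/
structure HilbertBimodule (A B X : Type*) [NonUnitalCStarAlgebra A] [NonUnitalCStarAlgebra B]
    [NormedAddCommGroup X] [NormedSpace ℂ X] [CompleteSpace X] where
  smulL : A → X → X
  smulR : X → B → X
  innerL : X → X → A
  innerR : X → X → B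
  -- right Hilbert `B`-module axioms
  smulR_add : ∀ x b b', smulR x (b + b') = smulR x b + smulR x b'
  add_smulR : ∀ x y b, smulR (x + y) b = smulR x b + smulR y b
  smulR_mul : ∀ x b b', smulR x (b * b') = smulR (smulR x b) b'
  smulR_csmul : ∀ (c : ℂ) x b, smulR (c • x) b = c • smulR x b
  csmul_smulR : ∀ (c : ℂ) x b, smulR x (c • b) = c • smulR x b
  innerR_add_right : ∀ x y z, innerR x (y + z) = innerR x y + innerR x z
  innerR_csmul_right : ∀ (c : ℂ) x y, innerR x (c • y) = c • innerR x y
  star_innerR : ∀ x y, star (innerR x y) = innerR y x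
  innerR_smulR : ∀ x y b, innerR x (smulR y b) = innerR x y * b
  innerR_self_nonneg : ∀ x, ∃ b, innerR x x = star b * b
  norm_innerR_self : ∀ x, ‖x‖ ^ 2 = ‖innerR x x‖
  -- left Hilbert `A`-module axioms
  smulL_add : ∀ a x y, smulL a (x + y) = smulL a x + smulL a y
  add_smulL : ∀ a a' x, smulL (a + a') x = smulL a x + smulL a' x
  smulL_mul : ∀ a a' x, smulL (a * a') x = smulL a (smulL a' x)
  smulL_csmul : ∀ (c : ℂ) a x, smulL (c • a) x = c • smulL a x
  csmul_smulL : ∀ (c : ℂ) a x, smulL a (c • x) = c • smulL a x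
  innerL_add_left : ∀ x y z, innerL (x + y) z = innerL x z + innerL y z
  innerL_csmul_left : ∀ (c : ℂ) x y, innerL (c • x) y = c • innerL x y
  star_innerL : ∀ x y, star (innerL x y) = innerL y x
  innerL_smulL : ∀ a x y, innerL (smulL a x) y = a * innerL x y
  innerL_self_nonneg : ∀ x, ∃ a, innerL x x = star a * a
  norm_innerL_self : ∀ x, ‖x‖ ^ 2 = ‖innerL x x‖
  -- the two module actions commute and are mutually adjointable
  smulL_smulR : ∀ a x b, smulR (smulL a x) b = smulL a (smulR x b)
  innerR_smulL : ∀ a x y, innerR (smulL a x) y = innerR x (smulL (star a) y)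
  innerL_smulR : ∀ x y b, innerL (smulR x b) y = innerL x (smulR y (star b))
  -- the compatibility condition `⟨x, y⟩_A · z = x · ⟨y, z⟩_B`
  compat : ∀ x y z, smulL (innerL x y) z = smulR x (innerR y z)

/-- An `A`–`B` Hilbert bimodule is *right-full* if the closed span of `⟨X, X⟩_B` is `B`. -/
def HilbertBimodule.RightFull {A B X : Type*} [NonUnitalCStarAlgebra A]
    [NonUnitalCStarAlgebra B] [NormedAddCommGroup X] [NormedSpace ℂ X] [CompleteSpace X]
    (hX : HilbertBimodule A B X) : Prop :=
  Dense (Submodule.span ℂ {b : B | ∃ x y, b = hX.innerR x y} : Set B)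

/-- An `A`–`B` Hilbert bimodule is *left-full* if the closed span of `⟨X, X⟩_A` is `A`. -/
def HilbertBimodule.LeftFull {A B X : Type*} [NonUnitalCStarAlgebra A]
    [NonUnitalCStarAlgebra B] [NormedAddCommGroup X] [NormedSpace ℂ X] [CompleteSpace X]
    (hX : HilbertBimodule A B X) : Prop :=
  Dense (Submodule.span ℂ {a : A | ∃ x y, a = hX.innerL x y} : Set A)

/-- A witness realizing `MX` as the multiplier bimodule `M(X) = 𝓛_B(B, X)` of the
`A`–`B` Hilbert bimodule `X`: an `M(A)`–`M(B)` Hilbert bimodule containing `X` such that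
`M(X)·B ⊆ X` and `A·M(X) ⊆ X`, whose elements are separated by, and exhausted by,
adjointable maps `B → X` (this is the double-centralizer description of `𝓛_B(B, X)`). -/
structure MultiplierBimodule {A B X : Type*} [NonUnitalCStarAlgebra A]
    [NonUnitalCStarAlgebra B] [NormedAddCommGroup X] [NormedSpace ℂ X] [CompleteSpace X]
    (hX : HilbertBimodule A B X) (MX : Type*) [NormedAddCommGroup MX] [NormedSpace ℂ MX] where
  embed : X →ₗ[ℂ] MX
  embed_injective : Function.Injective embed
  smulL : 𝓜(ℂ, A) → MX → MX
  smulR : MX → 𝓜(ℂ, B) → MX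
  innerL : MX → MX → 𝓜(ℂ, A)
  innerR : MX → MX → 𝓜(ℂ, B)
  -- module and inner-product laws
  smulL_add : ∀ n m m', smulL n (m + m') = smulL n m + smulL n m'
  add_smulL : ∀ n n' m, smulL (n + n') m = smulL n m + smulL n' m
  smulL_mul : ∀ n n' m, smulL (n * n') m = smulL n (smulL n' m)
  smulR_add : ∀ m n n', smulR m (n + n') = smulR m n + smulR m n'
  add_smulR : ∀ m m' n, smulR (m + m') n = smulR m n + smulR m' n
  smulR_mul : ∀ m n n', smulR m (n * n') = smulR (smulR m n) n'
  smulL_smulR : ∀ n m n', smulR (smulL n m) n' = smulL n (smulR m n')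
  smulL_one : ∀ m, smulL 1 m = m
  smulR_one : ∀ m, smulR m 1 = m
  innerR_add_right : ∀ m m' m'', innerR m (m' + m'') = innerR m m' + innerR m m''
  star_innerR : ∀ m m', star (innerR m m') = innerR m' m
  innerR_smulR : ∀ m m' n, innerR m (smulR m' n) = innerR m m' * n
  innerR_smulL : ∀ n m m', innerR (smulL n m) m' = innerR m (smulL (star n) m')
  innerL_add_left : ∀ m m' m'', innerL (m + m') m'' = innerL m m'' + innerL m' m''
  star_innerL : ∀ m m', star (innerL m m') = innerL m' m
  innerL_smulL : ∀ n m m', innerL (smulL n m) m' = n * innerL m m'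
  innerL_smulR : ∀ m m' n, innerL (smulR m n) m' = innerL m (smulR m' (star n))
  -- compatibility with the bimodule structure of `X`
  embed_smulL : ∀ (a : A) (x : X), smulL (a : 𝓜(ℂ, A)) (embed x) = embed (hX.smulL a x)
  embed_smulR : ∀ (x : X) (b : B), smulR (embed x) (b : 𝓜(ℂ, B)) = embed (hX.smulR x b)
  embed_innerR : ∀ x y : X, innerR (embed x) (embed y) = ((hX.innerR x y : B) : 𝓜(ℂ, B))
  embed_innerL : ∀ x y : X, innerL (embed x) (embed y) = ((hX.innerL x y : A) : 𝓜(ℂ, A))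
  -- `X` sits as an "ideal" in `MX`
  smulR_coe_mem : ∀ (m : MX) (b : B), smulR m (b : 𝓜(ℂ, B)) ∈ Set.range embed
  coe_smulL_mem : ∀ (a : A) (m : MX), smulL (a : 𝓜(ℂ, A)) m ∈ Set.range embed
  -- elements of `MX` are exactly the adjointable maps `B → X` (i.e. `MX = 𝓛_B(B, X)`)
  ext_right : ∀ m m' : MX, (∀ b : B, smulR m (b : 𝓜(ℂ, B)) = smulR m' (b : 𝓜(ℂ, B))) → m = m'
  exists_of_adjointable : ∀ (f : B → X) (g : X → B),
    (∀ b b', f (b + b') = f b + f b') →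
    (∀ b b', f (b * b') = hX.smulR (f b) b') →
    (∀ b x, hX.innerR (f b) x = star b * g x) →
    ∃ m : MX, ∀ b : B, smulR m (b : 𝓜(ℂ, B)) = embed (f b)

/-- The relative commutant
`C(X, ι, ζ) = {x ∈ M(X) : ι(k)·x = x·ζ(k) ∈ X for all k ∈ 𝒦}` of a pair of `𝒦`-algebra
structures on the coefficient algebras of a Hilbert bimodule `X`. -/
def bimodRelComm {K A B X MX : Type*} [NonUnitalCStarAlgebra K] [NonUnitalCStarAlgebra A]
    [NonUnitalCStarAlgebra B] [NormedAddCommGroup X] [NormedSpace ℂ X] [CompleteSpace X]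
    [NormedAddCommGroup MX] [NormedSpace ℂ MX]
    (ι : K →⋆ₙₐ[ℂ] 𝓜(ℂ, A)) (ζ : K →⋆ₙₐ[ℂ] 𝓜(ℂ, B))
    {hX : HilbertBimodule A B X} (mX : MultiplierBimodule hX MX) : Set MX :=
  {m | ∀ k : K, mX.smulL (ι k) m = mX.smulR m (ζ k) ∧ mX.smulR m (ζ k) ∈ Set.range mX.embed}

/-! ### The algebra inside its multiplier algebra -/

section coeAPI
variable {B : Type*} [NonUnitalCStarAlgebra B]

lemma coe_add' (a b : B) : ((a + b : B) : 𝓜(ℂ, B)) = a + b :=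
  map_add (DoubleCentralizer.coeHom (𝕜 := ℂ) (A := B)) a b

lemma coe_mul' (a b : B) : ((a * b : B) : 𝓜(ℂ, B)) = a * b :=
  map_mul (DoubleCentralizer.coeHom (𝕜 := ℂ) (A := B)) a b

lemma coe_star' (a : B) : ((star a : B) : 𝓜(ℂ, B)) = star (a : 𝓜(ℂ, B)) :=
  map_star (DoubleCentralizer.coeHom (𝕜 := ℂ) (A := B)) a

lemma coe_sub' (a b : B) : ((a - b : B) : 𝓜(ℂ, B)) = a - b :=
  map_sub (DoubleCentralizer.coeHom (𝕜 := ℂ) (A := B)) a b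

lemma coe_smul' (c : ℂ) (b : B) : ((c • b : B) : 𝓜(ℂ, B)) = c • (b : 𝓜(ℂ, B)) :=
  map_smul (DoubleCentralizer.coeHom (𝕜 := ℂ) (A := B)) c b

lemma eq_of_mul_left {y z : B} (h : ∀ a : B, a * y = a * z) : y = z := by
  rw [← sub_eq_zero, ← CStarRing.star_mul_self_eq_zero_iff, mul_sub, h, sub_self]

lemma fst_mul' (T : 𝓜(ℂ, B)) (b c : B) : T.fst (b * c) = T.fst b * c := by
  refine eq_of_mul_left fun a => ?_
  rw [← T.central, ← mul_assoc, ← mul_assoc, T.central]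

lemma mul_coe' (T : 𝓜(ℂ, B)) (b : B) : T * (b : 𝓜(ℂ, B)) = ((T.fst b : B) : 𝓜(ℂ, B)) := by
  refine DoubleCentralizer.ext ℂ B _ _ (Prod.ext ?_ ?_)
  · ext c
    simpa using! fst_mul' T b c
  · ext c
    simpa using! (T.central c b)

lemma norm_coe' (b : B) : ‖(b : 𝓜(ℂ, B))‖ = ‖b‖ := by
  rw [← DoubleCentralizer.norm_fst]
  simp

lemma coe_injective' : Function.Injective (fun b : B => (b : 𝓜(ℂ, B))) := by
  intro a b h
  have h : (a : 𝓜(ℂ, B)) = b := h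
  rw [← sub_eq_zero, ← norm_eq_zero, ← norm_coe', coe_sub', h, sub_self, norm_zero]

/-- The copy of `B` in `M(B)`, as a submodule. -/
def coeSub (B : Type*) [NonUnitalCStarAlgebra B] : Submodule ℂ 𝓜(ℂ, B) where
  carrier := Set.range ((↑) : B → 𝓜(ℂ, B))
  add_mem' := by rintro _ _ ⟨a, rfl⟩ ⟨b, rfl⟩; exact ⟨a + b, coe_add' a b⟩
  zero_mem' := ⟨0, map_zero (DoubleCentralizer.coeHom (𝕜 := ℂ) (A := B))⟩
  smul_mem' := by rintro c _ ⟨b, rfl⟩; exact ⟨c • b, coe_smul' c b⟩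

lemma coe_isometry : Isometry ((↑) : B → 𝓜(ℂ, B)) :=
  Isometry.of_dist_eq fun a b => by rw [dist_eq_norm, dist_eq_norm, ← coe_sub', norm_coe']

lemma isClosed_coeSub : IsClosed (coeSub B : Set 𝓜(ℂ, B)) :=
  coe_isometry.isClosedEmbedding.isClosed_range

lemma mul_mem_coeSub (T : 𝓜(ℂ, B)) {x : 𝓜(ℂ, B)} (hx : x ∈ coeSub B) : T * x ∈ coeSub B := by
  obtain ⟨b, rfl⟩ := hx
  exact ⟨_, (mul_coe' T b).symm⟩

lemma star_mem_coeSub {x : 𝓜(ℂ, B)} (hx : x ∈ coeSub B) : star x ∈ coeSub B := by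
  obtain ⟨b, rfl⟩ := hx
  exact ⟨_, coe_star' b⟩

lemma mem_coeSub_mul (T : 𝓜(ℂ, B)) {x : 𝓜(ℂ, B)} (hx : x ∈ coeSub B) : x * T ∈ coeSub B := by
  have := star_mem_coeSub (mul_mem_coeSub (star T) (star_mem_coeSub hx))
  rwa [star_mul, star_star, star_star] at this

/-- Multipliers are determined by their left action on `B`. -/
lemma mult_ext {S T : 𝓜(ℂ, B)} (h : ∀ b : B, S * b = T * b) : S = T := by
  rw [← sub_eq_zero, ← norm_eq_zero, ← DoubleCentralizer.norm_fst, norm_eq_zero]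
  ext b
  have := h b
  rw [mul_coe', mul_coe'] at this
  simpa [sub_eq_zero] using coe_injective' this

lemma norm_le_of_mul_coe {T : 𝓜(ℂ, B)} {C : ℝ} (hC : 0 ≤ C)
    (h : ∀ b : B, ‖T * (b : 𝓜(ℂ, B))‖ ≤ C * ‖b‖) : ‖T‖ ≤ C := by
  rw [← DoubleCentralizer.norm_fst]
  refine T.fst.opNorm_le_bound hC fun b => ?_
  simpa [mul_coe', norm_coe'] using h b
end coeAPI

/-! ### Matrix units and truncated amplification -/

section MU
open Finset
variable {M : Type*} [CStarAlgebra M]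

/-- A system of matrix units in a unital C⋆-algebra (possibly zero). -/
structure IsMU (e : ℕ → ℕ → M) : Prop where
  mul_eq : ∀ i j k l, e i j * e k l = if j = k then e i l else 0
  star_eq : ∀ i j, star (e i j) = e j i

/-- The projection `∑_{i < n} e i i`. -/
def proj (e : ℕ → ℕ → M) (n : ℕ) : M := ∑ i ∈ range n, e i i

/-- The truncated amplification `∑_{i < n} e i 0 * c * e 0 i` of `c`. -/
def amp (e : ℕ → ℕ → M) (n : ℕ) (c : M) : M := ∑ i ∈ range n, e i 0 * c * e 0 i

namespace IsMU
variable {e : ℕ → ℕ → M}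

lemma mul_same (he : IsMU e) (i j l : ℕ) : e i j * e j l = e i l := by simp [he.mul_eq]

lemma star_proj (he : IsMU e) (n : ℕ) : star (proj e n) = proj e n := by simp [proj, he.star_eq]

lemma proj_mul (he : IsMU e) (n i j : ℕ) : proj e n * e i j = if i < n then e i j else 0 := by
  simp [proj, sum_mul, he.mul_eq]

lemma mul_proj (he : IsMU e) (n i j : ℕ) : e i j * proj e n = if j < n then e i j else 0 := by
  simp [proj, mul_sum, he.mul_eq]

lemma proj_mul_proj (he : IsMU e) (n : ℕ) : proj e n * proj e n = proj e n := by
  conv_lhs => rw [proj, sum_mul]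
  exact sum_congr rfl fun i hi => by rw [← proj, he.mul_proj, if_pos (mem_range.1 hi)]

lemma norm_proj_le (he : IsMU e) (n : ℕ) : ‖proj e n‖ ≤ 1 := by
  have h := CStarRing.norm_star_mul_self (x := proj e n)
  rw [he.star_proj, he.proj_mul_proj] at h
  nlinarith [norm_nonneg (proj e n)]

lemma norm_le_one (he : IsMU e) (i j : ℕ) : ‖e i j‖ ≤ 1 := by
  have h0 := CStarRing.norm_star_mul_self (x := e j j)
  have h := CStarRing.norm_star_mul_self (x := e i j)
  rw [he.star_eq, he.mul_same] at h h0
  have : ‖e j j‖ ≤ 1 := by nlinarith [norm_nonneg (e j j)]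
  nlinarith [norm_nonneg (e i j)]

lemma amp_mul (he : IsMU e) (n : ℕ) (c : M) (i j : ℕ) :
    amp e n c * e i j = if i < n then e i 0 * c * e 0 j else 0 := by
  simp [amp, sum_mul, he.mul_eq, mul_assoc]

lemma mul_amp (he : IsMU e) (n : ℕ) (c : M) (i j : ℕ) :
    e i j * amp e n c = if j < n then e i 0 * c * e 0 j else 0 := by
  simp [amp, mul_sum, he.mul_eq, ← mul_assoc]

lemma star_amp (he : IsMU e) (n : ℕ) (c : M) : star (amp e n c) = amp e n (star c) := by
  simp [amp, he.star_eq, mul_assoc]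

lemma amp_mul_proj (he : IsMU e) {m n : ℕ} (h : m ≤ n) (c : M) :
    amp e n c * proj e m = amp e m c := by
  conv_rhs => rw [amp]
  rw [proj, mul_sum]
  refine sum_congr rfl fun i hi => ?_
  rw [he.amp_mul, if_pos ((mem_range.1 hi).trans_le h)]

lemma proj_mul_amp (he : IsMU e) {m n : ℕ} (h : m ≤ n) (c : M) :
    proj e m * amp e n c = amp e m c := by
  conv_rhs => rw [amp]
  rw [proj, sum_mul]
  refine sum_congr rfl fun i hi => ?_
  rw [he.mul_amp, if_pos ((mem_range.1 hi).trans_le h)]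

lemma star_amp_mul_amp (he : IsMU e) (n : ℕ) (c : M) :
    star (amp e n c) * amp e n c = amp e n (star c * e 0 0 * c) := by
  rw [he.star_amp]
  conv_lhs => enter [1]; rw [amp]
  conv_rhs => rw [amp]
  rw [sum_mul]
  refine sum_congr rfl fun i hi => ?_
  rw [mul_assoc _ (e 0 i), he.mul_amp, if_pos (mem_range.1 hi)]
  simp only [mul_assoc]

/-- Amplification of a positive element `h` does not increase the norm, since
`e i 0 * h * e 0 i ≤ ‖h‖ • e i i`. -/
lemma norm_amp_le_of_nonneg (he : IsMU e) (n : ℕ) (c : M) :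
    ‖amp e n (star c * c)‖ ≤ ‖star c * c‖ := by
  let _ := CStarAlgebra.spectralOrder M
  have _ := CStarAlgebra.spectralOrderedRing M
  have h1 : 0 ≤ amp e n (star c * c) := sum_nonneg fun i _ => by
    rw [show e i 0 * (star c * c) * e 0 i = star (c * e 0 i) * (c * e 0 i) by
      rw [star_mul, he.star_eq]; simp only [mul_assoc]]
    exact star_mul_self_nonneg _
  have h2 : amp e n (star c * c) ≤ ‖star c * c‖ • proj e n := by
    rw [amp, proj, smul_sum]
    refine sum_le_sum fun i _ => ?_
    have := CStarAlgebra.star_left_conjugate_le_norm_smul (a := e 0 i) (b := star c * c)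
      (IsSelfAdjoint.star_mul_self c)
    rwa [he.star_eq, he.mul_same] at this
  refine (CStarAlgebra.norm_le_norm_of_nonneg_of_le h1 h2).trans ?_
  rw [norm_smul, norm_norm]
  exact mul_le_of_le_one_right (norm_nonneg _) (he.norm_proj_le n)

/-- The general case follows from the positive one and the C⋆-identity, the amplification being
multiplicative on the corner. -/
lemma norm_amp_le (he : IsMU e) (n : ℕ) (c : M) : ‖amp e n c‖ ≤ ‖c‖ := by
  have h := he.norm_amp_le_of_nonneg n (e 0 0 * c)
  have h3 : star (e 0 0 * c) * (e 0 0 * c) = star c * e 0 0 * c := by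
    rw [star_mul, he.star_eq, mul_assoc, ← mul_assoc (e 0 0), he.mul_same, ← mul_assoc]
  rw [CStarRing.norm_star_mul_self, h3, ← he.star_amp_mul_amp, CStarRing.norm_star_mul_self] at h
  have h4 : ‖e 0 0 * c‖ ≤ ‖c‖ := (norm_mul_le _ _).trans
    (mul_le_of_le_one_left (norm_nonneg _) (he.norm_le_one 0 0))
  exact (abs_le_of_sq_le_sq' (by nlinarith) (norm_nonneg _)).2.trans h4

/-- An element commuting with the matrix units is the amplification of its corner. -/
lemma mul_proj_of_comm (he : IsMU e) {d : M} (hd : ∀ i j, e i j * d = d * e i j) (n : ℕ) :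
    d * proj e n = amp e n (d * e 0 0) := by
  rw [proj, mul_sum, amp]
  refine sum_congr rfl fun i _ => ?_
  rw [← mul_assoc, hd, mul_assoc, he.mul_same, mul_assoc, he.mul_same]
end IsMU
end MU

/-! ### Convergence along the matrix units of a `K`-algebra -/

section KAlg
open Filter Topology
variable {K : Type*} [NonUnitalCStarAlgebra K]

/-- A uniformly bounded sequence of linear maps on `K` which tends to zero on the matrix units
tends to zero pointwise. -/
lemma tendsto_zero_of_units (u : MatrixUnits K) {E : Type*} [NormedAddCommGroup E]
    [NormedSpace ℂ E] (T : ℕ → K →ₗ[ℂ] E) (C : ℝ) (hT : ∀ n k, ‖T n k‖ ≤ C * ‖k‖)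
    (h : ∀ i j, Tendsto (fun n => T n (u.u i j)) atTop (𝓝 0)) (k : K) :
    Tendsto (fun n => T n k) atTop (𝓝 0) := by
  let W : Submodule ℂ K :=
    { carrier := {k | Tendsto (fun n => T n k) atTop (𝓝 0)}
      add_mem' := fun ha hb => by simpa using! ha.add hb
      zero_mem' := by simp
      smul_mem' := fun c x hx => by simpa using! hx.const_smul c }
  have hW : Submodule.span ℂ (Set.range fun p : ℕ × ℕ => u.u p.1 p.2) ≤ W :=
    Submodule.span_le.2 (by rintro _ ⟨p, rfl⟩; exact h p.1 p.2)
  rw [Metric.tendsto_atTop]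
  intro ε hε
  have hC : 0 < |C| + 1 := by positivity
  obtain ⟨y, hy, hky⟩ := u.dense_span.exists_dist_lt k (div_pos (half_pos hε) hC)
  obtain ⟨N, hN⟩ := Metric.tendsto_atTop.1 (hW hy : Tendsto _ _ _) (ε / 2) (half_pos hε)
  refine ⟨N, fun n hn => ?_⟩
  have h1 := hN n hn
  rw [dist_zero_right] at h1 ⊢
  have h2 : ‖T n (k - y)‖ ≤ ε / 2 := (hT n _).trans <| by
    rw [dist_eq_norm, lt_div_iff₀ hC] at hky
    nlinarith [le_abs_self C, norm_nonneg (k - y)]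
  calc ‖T n k‖ = ‖T n (k - y) + T n y‖ := by rw [← map_add, sub_add_cancel]
    _ ≤ _ := norm_add_le _ _
    _ < ε := by linarith

/-- A closed linear subspace containing the matrix units is everything. -/
lemma units_induction (u : MatrixUnits K) (W : Submodule ℂ K) (hW : IsClosed (W : Set K))
    (h : ∀ i j, u.u i j ∈ W) (k : K) : k ∈ W := by
  have h1 : Submodule.span ℂ (Set.range fun p : ℕ × ℕ => u.u p.1 p.2) ≤ W :=
    Submodule.span_le.2 (by rintro _ ⟨p, rfl⟩; exact h p.1 p.2)
  exact hW.closure_subset_iff.2 h1 (u.dense_span k)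

variable {B : Type*} [NonUnitalCStarAlgebra B] (u : MatrixUnits K) (ζ : K →⋆ₙₐ[ℂ] 𝓜(ℂ, B))

/-- The image in `M(B)` of the matrix units of `K`. -/
def mu (i j : ℕ) : 𝓜(ℂ, B) := ζ (u.u i j)

lemma isMU_mu : IsMU (mu u ζ) where
  mul_eq i j k l := by
    rw [mu, mu, ← map_mul, u.u_mul]
    split_ifs <;> simp [mu]
  star_eq i j := by rw [mu, ← map_star, u.star_u, mu]

lemma norm_hom_le (k : K) : ‖ζ k‖ ≤ ‖k‖ := NonUnitalStarAlgHom.norm_apply_le ζ k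

lemma tendsto_proj_hom (k : K) : Tendsto (fun n => proj (mu u ζ) n * ζ k) atTop (𝓝 (ζ k)) := by
  have he := isMU_mu u ζ
  let T : ℕ → K →ₗ[ℂ] 𝓜(ℂ, B) := fun n =>
    { toFun := fun k => proj (mu u ζ) n * ζ k - ζ k
      map_add' := fun a b => by simp only [map_add, mul_add]; abel
      map_smul' := fun c a => by simp [map_smul, smul_sub] }
  have := tendsto_zero_of_units u T 2 (fun n k => ?_) (fun i j => ?_) k
  · simpa [T] using! this.add_const (ζ k)
  · refine (norm_sub_le _ _).trans ?_
    have h1 := norm_hom_le ζ k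
    have h2 := (norm_mul_le (proj (mu u ζ) n) (ζ k)).trans
      (mul_le_of_le_one_left (norm_nonneg _) (he.norm_proj_le n))
    linarith
  · refine tendsto_const_nhds.congr' ?_
    filter_upwards [eventually_gt_atTop i] with n hn
    change 0 = proj (mu u ζ) n * mu u ζ i j - mu u ζ i j
    rw [he.proj_mul, if_pos hn, sub_self]

/-- Nondegeneracy makes the projections `∑_{i < n} ζ(u i i)` converge strictly to `1`. -/
lemma tendsto_proj_coe (hζ : Nondegenerate ζ) (b : B) :
    Tendsto (fun n => proj (mu u ζ) n * (b : 𝓜(ℂ, B))) atTop (𝓝 (b : 𝓜(ℂ, B))) := by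
  have he := isMU_mu u ζ
  rw [Metric.tendsto_atTop]
  intro ε hε
  obtain ⟨y, hy, hby⟩ := Metric.mem_closure_iff.1 (hζ b) (ε / 3) (by linarith)
  let W : Submodule ℂ 𝓜(ℂ, B) :=
    { carrier := {y | Tendsto (fun n => proj (mu u ζ) n * y) atTop (𝓝 y)}
      add_mem' := fun ha hb => by simpa [mul_add] using! ha.add hb
      zero_mem' := by simp
      smul_mem' := fun c x hx => by simpa using! hx.const_smul c }
  have hW : y ∈ W := by
    refine (Submodule.span_le.2 ?_ : Submodule.span ℂ _ ≤ W) hy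
    rintro _ ⟨a, c, rfl⟩
    change Tendsto _ _ _
    simpa only [mul_assoc] using (tendsto_proj_hom u ζ a).mul_const (c : 𝓜(ℂ, B))
  obtain ⟨N, hN⟩ := Metric.tendsto_atTop.1 (hW : Tendsto _ _ _) (ε / 3) (by linarith)
  refine ⟨N, fun n hn => ?_⟩
  have h1 := hN n hn
  rw [dist_eq_norm] at h1 hby ⊢
  have h2 := (norm_mul_le (proj (mu u ζ) n) ((b : 𝓜(ℂ, B)) - y)).trans
    (mul_le_of_le_one_left (norm_nonneg _) (he.norm_proj_le n))
  rw [show proj (mu u ζ) n * (b : 𝓜(ℂ, B)) - b =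
    proj (mu u ζ) n * ((b : 𝓜(ℂ, B)) - y) + ((proj (mu u ζ) n * y - y) - (b - y)) by
    rw [mul_sub]; abel]
  refine (norm_add_le _ _).trans_lt ?_
  have := norm_sub_le (proj (mu u ζ) n * y - y) (b - y)
  linarith

lemma tendsto_coe_proj (hζ : Nondegenerate ζ) (b : B) :
    Tendsto (fun n => (b : 𝓜(ℂ, B)) * proj (mu u ζ) n) atTop (𝓝 (b : 𝓜(ℂ, B))) := by
  have h := (tendsto_proj_coe u ζ hζ (star b)).star
  simpa only [coe_star', star_mul, star_star, (isMU_mu u ζ).star_proj] using h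

end KAlg

/-! ### Corners of the relative commutant -/

section Corner
open Filter Topology Submodule
variable {K B : Type*} [NonUnitalCStarAlgebra K] [NonUnitalCStarAlgebra B]
  (u : MatrixUnits K) (ζ : K →⋆ₙₐ[ℂ] 𝓜(ℂ, B))

lemma IsMU.cauchySeq_amp_mul {M : Type*} [CStarAlgebra M] {e : ℕ → ℕ → M} (he : IsMU e)
    (c x : M) (hx : Tendsto (fun n => proj e n * x) atTop (𝓝 x)) :
    CauchySeq fun n => amp e n c * x := by
  refine cauchySeq_of_le_tendsto_0' (fun n => ‖c‖ * ‖x - proj e n * x‖) (fun m n hmn => ?_) ?_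
  · rw [dist_comm, dist_eq_norm, ← he.amp_mul_proj hmn c, mul_assoc, ← mul_sub]
    exact (norm_mul_le _ _).trans
      (mul_le_mul_of_nonneg_right (he.norm_amp_le n c) (norm_nonneg _))
  · simpa using ((tendsto_const_nhds (x := x)).sub hx).norm.const_mul ‖c‖

/-- Strict completeness of the multiplier algebra, for sequences. -/
lemma exists_strict_limit (T : ℕ → 𝓜(ℂ, B))
    (hl : ∀ b : B, CauchySeq fun n => (T n).fst b) (hr : ∀ b : B, CauchySeq fun n => (T n).snd b) :
    ∃ S : 𝓜(ℂ, B), ∀ b : B,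
      Tendsto (fun n => T n * (b : 𝓜(ℂ, B))) atTop (𝓝 (S * (b : 𝓜(ℂ, B)))) := by
  choose f hf using fun b => cauchySeq_tendsto_of_complete (hl b)
  choose g hg using fun b => cauchySeq_tendsto_of_complete (hr b)
  refine ⟨⟨(continuousLinearMapOfTendsto (fun n => (T n).fst) (tendsto_pi_nhds.2 hf),
    continuousLinearMapOfTendsto (fun n => (T n).snd) (tendsto_pi_nhds.2 hg)), fun x y => ?_⟩,
    fun b => ?_⟩
  · refine tendsto_nhds_unique ((hg x).mul_const y) ?_
    simpa only [(T _).central] using! (hf y).const_mul x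
  · simp only [mul_coe']
    exact (coe_isometry.continuous.tendsto _).comp (hf b)

/-- The relative commutant as a linear subspace. -/
def relCommSub : Submodule ℂ 𝓜(ℂ, B) where
  carrier := relComm ζ
  add_mem' {a b} ha hb k := ⟨by rw [mul_add, add_mul, (ha k).1, (hb k).1], by
    rw [add_mul]; exact (coeSub B).add_mem (ha k).2 (hb k).2⟩
  zero_mem' k := ⟨by simp, by rw [zero_mul]; exact (coeSub B).zero_mem⟩
  smul_mem' c a ha k := ⟨by rw [mul_smul_comm, smul_mul_assoc, (ha k).1], by
    rw [smul_mul_assoc]; exact (coeSub B).smul_mem c (ha k).2⟩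

lemma isClosed_relComm : IsClosed (relComm ζ) := by
  have : relComm ζ = ⋂ k, {a | ζ k * a = a * ζ k} ∩ {a | a * ζ k ∈ (coeSub B : Set 𝓜(ℂ, B))} := by
    ext a; simp only [Set.mem_iInter]; rfl
  rw [this]
  refine isClosed_iInter fun k => (isClosed_eq (by fun_prop) (by fun_prop)).inter ?_
  exact isClosed_coeSub.preimage (by fun_prop : Continuous fun a : 𝓜(ℂ, B) => a * ζ k)

variable {ζ}

lemma mem_relComm_of_units {d : 𝓜(ℂ, B)} (h1 : ∀ i j, mu u ζ i j * d = d * mu u ζ i j)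
    (h2 : ∀ i j, d * mu u ζ i j ∈ coeSub B) : d ∈ relComm ζ := by
  have hc : Continuous ζ := AddMonoidHomClass.continuous_of_bound ζ 1
    (by simpa only [one_mul] using norm_hom_le ζ)
  let W : Submodule ℂ K :=
    { carrier := {k | ζ k * d = d * ζ k ∧ d * ζ k ∈ coeSub B}
      add_mem' := fun {a b} ha hb => by
        simp only [Set.mem_ofPred_eq, map_add, mul_add, add_mul] at *
        exact ⟨by rw [ha.1, hb.1], (coeSub B).add_mem ha.2 hb.2⟩
      zero_mem' := by simp [(coeSub B).zero_mem]
      smul_mem' := fun c a ha => by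
        simp only [Set.mem_ofPred_eq, map_smul, mul_smul_comm, smul_mul_assoc] at *
        exact ⟨by rw [ha.1], (coeSub B).smul_mem c ha.2⟩ }
  have hW : IsClosed (W : Set K) :=
    (isClosed_eq (by fun_prop : Continuous fun k => ζ k * d) (by fun_prop)).inter
      (isClosed_coeSub.preimage (by fun_prop : Continuous fun k => d * ζ k))
  exact fun k => units_induction u W hW (fun i j => ⟨h1 i j, h2 i j⟩) k

/-- Every element of the corner `e₀₀ B e₀₀` is the corner of an element of `C(B, ζ)`, namely of
its infinite amplification. -/
lemma exists_relComm_of_corner (hζ : Nondegenerate ζ) {c : 𝓜(ℂ, B)} (hc : c ∈ coeSub B)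
    (h0 : mu u ζ 0 0 * c * mu u ζ 0 0 = c) : ∃ d ∈ relComm ζ, d * mu u ζ 0 0 = c := by
  have he := isMU_mu u ζ
  have hcau (c : 𝓜(ℂ, B)) (b : B) : CauchySeq fun n => (amp (mu u ζ) n c).fst b := by
    have := he.cauchySeq_amp_mul c b (tendsto_proj_coe u ζ hζ b)
    simp only [mul_coe'] at this
    exact coe_isometry.isUniformInducing.cauchy_map_iff.1 (by rw [map_map]; exact this)
  obtain ⟨d, hd⟩ := exists_strict_limit (fun n => amp (mu u ζ) n c) (hcau c) fun b => by
    have := (starₗᵢ ℂ : B ≃ₗᵢ⋆[ℂ] B).isometry.uniformContinuous.comp_cauchySeq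
      (hcau (star c) (star b))
    simpa only [Function.comp_def, ← he.star_amp, DoubleCentralizer.star_fst, star_star,
      starₗᵢ_apply] using this
  have hr (i j : ℕ) : d * mu u ζ i j = mu u ζ i 0 * c * mu u ζ 0 j := mult_ext fun b => by
    have h1 := hd ((mu u ζ i j).fst b)
    rw [← mul_coe'] at h1
    rw [mul_assoc]
    refine tendsto_nhds_unique h1 (tendsto_const_nhds.congr' ?_)
    filter_upwards [eventually_gt_atTop i] with n hn
    rw [← mul_assoc, he.amp_mul, if_pos hn]
  have hl (i j : ℕ) : mu u ζ i j * d = mu u ζ i 0 * c * mu u ζ 0 j := mult_ext fun b => by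
    rw [mul_assoc]
    refine tendsto_nhds_unique ((hd b).const_mul _) (tendsto_const_nhds.congr' ?_)
    filter_upwards [eventually_gt_atTop j] with n hn
    rw [← mul_assoc, he.mul_amp, if_pos hn]
  refine ⟨d, mem_relComm_of_units u (fun i j => by rw [hl, hr]) fun i j => ?_, by rw [hr, h0]⟩
  rw [hr]
  exact mem_coeSub_mul _ (mul_mem_coeSub _ hc)

/-- The norm of an element commuting with the matrix units is bounded by that of its corner, since
it is the strict limit of the truncated amplifications of that corner. -/
lemma norm_le_corner (hζ : Nondegenerate ζ) {d : 𝓜(ℂ, B)}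
    (hd : ∀ i j, mu u ζ i j * d = d * mu u ζ i j) : ‖d‖ ≤ ‖d * mu u ζ 0 0‖ := by
  have he := isMU_mu u ζ
  refine norm_le_of_mul_coe (norm_nonneg _) fun b => ?_
  refine le_of_tendsto ((tendsto_proj_coe u ζ hζ b).const_mul d).norm (Eventually.of_forall ?_)
  intro n
  rw [← mul_assoc, he.mul_proj_of_comm hd, ← norm_coe' b]
  exact (norm_mul_le _ _).trans (mul_le_mul_of_nonneg_right (he.norm_amp_le _ _) (norm_nonneg _))

/-- The comparison of fullness: `S₀ ⊆ M(B)` and `R₀ ⊆ B` stand for the inner products of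
`C(X, ι, ζ)` and of `X`, and the hypotheses relate them only through corners.  The lemma is used
once for the right and once for the left inner products. -/
theorem full_iff_of_corner (hζ : Nondegenerate ζ) (S₀ : Set 𝓜(ℂ, B)) (R₀ : Set B)
    (h1 : ∀ s ∈ S₀, ∀ k, ζ k * s = s * ζ k)
    (h2 : ∀ s ∈ S₀, ∀ i j, ∃ r ∈ R₀, mu u ζ i 0 * s * mu u ζ 0 j = (r : 𝓜(ℂ, B)))
    (h3 : ∀ r ∈ R₀, mu u ζ 0 0 * (r : 𝓜(ℂ, B)) * mu u ζ 0 0 ∈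
      ((span ℂ S₀).map (LinearMap.mulRight ℂ (mu u ζ 0 0))).topologicalClosure) :
    closure (span ℂ S₀ : Set 𝓜(ℂ, B)) = relComm ζ ↔ Dense (span ℂ R₀ : Set B) := by
  have he := isMU_mu u ζ
  set e := mu u ζ with e_def
  let coeL : B →L[ℂ] 𝓜(ℂ, B) :=
    ⟨{ toFun := fun b => b, map_add' := coe_add', map_smul' := coe_smul' },
      coe_isometry.continuous⟩
  constructor
  · intro hS
    let N : Submodule ℂ 𝓜(ℂ, B) := ((span ℂ R₀).map coeL.toLinearMap).topologicalClosure
    have hNc : IsClosed (N : Set 𝓜(ℂ, B)) := isClosed_topologicalClosure _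
    have hR : ∀ r ∈ R₀, (r : 𝓜(ℂ, B)) ∈ N := fun r hr =>
      le_topologicalClosure _ (mem_map_of_mem (subset_span hr))
    have hD (d) (hd : d ∈ relComm ζ) (i j) : e i 0 * d * e 0 j ∈ N := by
      rw [← hS] at hd
      let T : 𝓜(ℂ, B) →ₗ[ℂ] 𝓜(ℂ, B) :=
        (LinearMap.mulRight ℂ (e 0 j)).comp (LinearMap.mulLeft ℂ (e i 0))
      have hT : Continuous T := (continuous_const.mul continuous_id).mul continuous_const
      have hle : span ℂ S₀ ≤ N.comap T := span_le.2 fun s hs => by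
        obtain ⟨r, hr, hsr⟩ := h2 s hs i j
        change e i 0 * s * e 0 j ∈ N
        rw [hsr]; exact hR r hr
      exact closure_minimal hle (hNc.preimage hT) hd
    -- Every block `e i i * b * e j j` is the translate `e i 0 * c * e 0 j` of an element `c` of the
    -- corner, which is itself the corner of an element of the relative commutant.
    have hblock (b : B) (i j) : e i i * (b : 𝓜(ℂ, B)) * e j j ∈ N := by
      obtain ⟨d, hd, hdc⟩ := exists_relComm_of_corner u hζ (c := e 0 i * (b : 𝓜(ℂ, B)) * e j 0)
        (mem_coeSub_mul _ (mul_mem_coeSub _ ⟨b, rfl⟩)) (by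
          rw [← e_def, ← mul_assoc, ← mul_assoc, he.mul_same, mul_assoc, he.mul_same])
      have := hD d hd i j
      rw [← he.mul_same 0 0 j, ← mul_assoc, mul_assoc (e i 0), hdc, ← mul_assoc, ← mul_assoc,
        he.mul_same, mul_assoc, he.mul_same] at this
      exact this
    have hall (b : B) : (b : 𝓜(ℂ, B)) ∈ N := by
      refine hNc.mem_of_tendsto (tendsto_proj_coe u ζ hζ b) (Eventually.of_forall fun n => ?_)
      rw [mul_coe']
      refine hNc.mem_of_tendsto (tendsto_coe_proj u ζ hζ _) (Eventually.of_forall fun m => ?_)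
      rw [← mul_coe', ← e_def, proj, proj, Finset.sum_mul, Finset.sum_mul]
      refine sum_mem fun i _ => ?_
      rw [Finset.mul_sum]
      exact sum_mem fun j _ => hblock b i j
    intro b
    rw [coe_isometry.isUniformInducing.isInducing.closure_eq_preimage_closure_image]
    exact hall b
  · intro hR
    refine Set.Subset.antisymm ?_ fun d hd => ?_
    · refine closure_minimal (span_le.2 ?_ : span ℂ S₀ ≤ relCommSub ζ) (isClosed_relComm ζ)
      intro s hs
      refine mem_relComm_of_units u (fun i j => h1 s hs _) fun i j => ?_
      obtain ⟨r, hr, hsr⟩ := h2 s hs i j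
      rw [← e_def, ← he.mul_same i 0 j, ← mul_assoc]
      have : s * e i 0 = e i 0 * s := (h1 s hs _).symm
      rw [this, hsr]
      exact ⟨r, rfl⟩
    -- `d` is approximated by approximating its corner: elements commuting with the matrix units
    -- are controlled in norm by their corners.
    · set W := span ℂ S₀
      set V := (W.map (LinearMap.mulRight ℂ (e 0 0))).topologicalClosure with hV
      have hc (b : B) : e 0 0 * (b : 𝓜(ℂ, B)) * e 0 0 ∈ V := by
        let T : B →ₗ[ℂ] 𝓜(ℂ, B) :=
          ((LinearMap.mulRight ℂ (e 0 0)).comp (LinearMap.mulLeft ℂ (e 0 0))).comp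
            coeL.toLinearMap
        have hT : Continuous T := (continuous_const.mul coeL.continuous).mul continuous_const
        have hle : span ℂ R₀ ≤ V.comap T := span_le.2 fun r hr => h3 r hr
        exact closure_minimal hle ((isClosed_topologicalClosure _).preimage hT) (hR b)
      have hcomm (i j) : e i j * d = d * e i j := (hd _).1
      obtain ⟨c, hcd⟩ := (hd (u.u 0 0)).2
      have hdV : d * e 0 0 ∈ V := by
        have := hc c
        have hcd' : (c : 𝓜(ℂ, B)) = d * e 0 0 := hcd
        rwa [hcd', ← mul_assoc, hcomm, mul_assoc, mul_assoc, he.mul_same, he.mul_same] at this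
      rw [Metric.mem_closure_iff]
      intro ε hε
      obtain ⟨_, ⟨s, hs, rfl⟩, hds⟩ := Metric.mem_closure_iff.1 hdV ε hε
      refine ⟨s, hs, ?_⟩
      rw [dist_eq_norm, LinearMap.mulRight_apply, ← sub_mul] at hds
      rw [dist_eq_norm]
      refine (norm_le_corner u hζ fun i j => ?_).trans_lt hds
      have hsc : W ≤ LinearMap.ker (LinearMap.mulLeft ℂ (e i j) - LinearMap.mulRight ℂ (e i j)) :=
        span_le.2 fun s hs => by
          simpa [sub_eq_zero] using! h1 s hs (u.u i j)
      have hs' : e i j * s = s * e i j := by simpa [sub_eq_zero] using hsc hs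
      rw [← e_def, mul_sub, sub_mul, hcomm, hs']

end Corner

lemma coe_mul_mult {B : Type*} [NonUnitalCStarAlgebra B] (b : B) (T : 𝓜(ℂ, B)) :
    (b : 𝓜(ℂ, B)) * T = ((T.snd b : B) : 𝓜(ℂ, B)) :=
  mult_ext fun c => by rw [mul_assoc, mul_coe', ← coe_mul', ← coe_mul', T.central]

/-! ### Hilbert bimodules -/

section Hilbert
open Filter Topology
variable {A B X : Type*} [NonUnitalCStarAlgebra A] [NonUnitalCStarAlgebra B]
  [NormedAddCommGroup X] [NormedSpace ℂ X] [CompleteSpace X]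

/-- C⋆-algebras have approximate right units, in the pointwise sense. -/
lemma exists_approx_unit (h : B) (ε : ℝ) (hε : 0 < ε) : ∃ b : B, ‖b‖ ≤ 1 ∧ ‖h - h * b‖ < ε := by
  let _ := CStarAlgebra.spectralOrder B
  have _ := CStarAlgebra.spectralOrderedRing B
  have hl := CStarAlgebra.increasingApproximateUnit B
  have _ := hl.neBot
  have h1 := (Metric.tendsto_nhds.1 (hl.tendsto_mul_left h)) ε hε
  obtain ⟨b, hb, hb'⟩ := (h1.and hl.eventually_norm).exists
  refine ⟨b, hb', ?_⟩
  rwa [dist_comm, dist_eq_norm] at hb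

namespace HilbertBimodule
variable (hX : HilbertBimodule A B X)

lemma smulR_sub' (x : X) (b b' : B) : hX.smulR x (b - b') = hX.smulR x b - hX.smulR x b' :=
  eq_sub_of_add_eq (by rw [← hX.smulR_add, sub_add_cancel])

lemma sub_smulR' (x y : X) (b : B) : hX.smulR (x - y) b = hX.smulR x b - hX.smulR y b :=
  eq_sub_of_add_eq (by rw [← hX.add_smulR, sub_add_cancel])

lemma sub_smulL' (a a' : A) (x : X) : hX.smulL (a - a') x = hX.smulL a x - hX.smulL a' x :=
  eq_sub_of_add_eq (by rw [← hX.add_smulL, sub_add_cancel])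

lemma smulL_sub' (a : A) (x y : X) : hX.smulL a (x - y) = hX.smulL a x - hX.smulL a y :=
  eq_sub_of_add_eq (by rw [← hX.smulL_add, sub_add_cancel])

lemma innerR_sub_right' (x y z : X) : hX.innerR x (y - z) = hX.innerR x y - hX.innerR x z :=
  eq_sub_of_add_eq (by rw [← hX.innerR_add_right, sub_add_cancel])

lemma innerR_sub_left' (x y z : X) : hX.innerR (x - y) z = hX.innerR x z - hX.innerR y z := by
  rw [← hX.star_innerR, innerR_sub_right', star_sub, hX.star_innerR, hX.star_innerR]

lemma innerL_sub_left' (x y z : X) : hX.innerL (x - y) z = hX.innerL x z - hX.innerL y z :=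
  eq_sub_of_add_eq (by rw [← hX.innerL_add_left, sub_add_cancel])

lemma innerL_sub_right' (x y z : X) : hX.innerL x (y - z) = hX.innerL x y - hX.innerL x z := by
  rw [← hX.star_innerL, innerL_sub_left', star_sub, hX.star_innerL, hX.star_innerL]

lemma innerR_smulR_left' (x y : X) (b : B) :
    hX.innerR (hX.smulR x b) y = star b * hX.innerR x y := by
  rw [← hX.star_innerR, hX.innerR_smulR, star_mul, hX.star_innerR]

lemma innerL_smulL_right' (a : A) (x y : X) :
    hX.innerL x (hX.smulL a y) = hX.innerL x y * star a := by
  rw [← hX.star_innerL, hX.innerL_smulL, star_mul, hX.star_innerL]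

lemma norm_smulL_le' (a : A) (x : X) : ‖hX.smulL a x‖ ≤ ‖a‖ * ‖x‖ := by
  refine (sq_le_sq₀ (norm_nonneg _) (by positivity)).1 ?_
  rw [hX.norm_innerL_self, hX.innerL_smulL, innerL_smulL_right', mul_pow, hX.norm_innerL_self x]
  refine (norm_mul_le _ _).trans ?_
  have := norm_mul_le (hX.innerL x x) (star a)
  rw [norm_star] at this
  nlinarith [norm_nonneg a]

lemma norm_smulR_le' (x : X) (b : B) : ‖hX.smulR x b‖ ≤ ‖x‖ * ‖b‖ := by
  refine (sq_le_sq₀ (norm_nonneg _) (by positivity)).1 ?_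
  rw [hX.norm_innerR_self, hX.innerR_smulR, innerR_smulR_left', mul_pow, hX.norm_innerR_self x]
  refine (norm_mul_le _ _).trans ?_
  have := norm_mul_le (star b) (hX.innerR x x)
  rw [norm_star] at this
  nlinarith [norm_nonneg b]

/-- Cauchy–Schwarz.  In a bimodule it needs no order: writing `⟨x, x⟩_A = a⋆a`, the product
`⟨y, x⟩⟨x, y⟩` equals `⟨y, ⟨x, x⟩_A y⟩ = ⟨ay, ay⟩`. -/
lemma norm_innerR_le' (x y : X) : ‖hX.innerR x y‖ ≤ ‖x‖ * ‖y‖ := by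
  refine (sq_le_sq₀ (norm_nonneg _) (by positivity)).1 ?_
  obtain ⟨a, ha⟩ := hX.innerL_self_nonneg x
  have h1 : star (hX.innerR x y) * hX.innerR x y =
      hX.innerR (hX.smulL a y) (hX.smulL a y) := by
    rw [hX.star_innerR, ← hX.innerR_smulR, ← hX.compat, ha, hX.innerR_smulL, ← hX.smulL_mul]
  have hx : ‖x‖ ^ 2 = ‖a‖ ^ 2 := by
    rw [hX.norm_innerL_self, ha, CStarRing.norm_star_mul_self, sq]
  rw [sq, ← CStarRing.norm_star_mul_self, h1, ← hX.norm_innerR_self, mul_pow, hx, ← mul_pow]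
  exact pow_le_pow_left₀ (norm_nonneg _) (hX.norm_smulL_le' a y) 2

lemma norm_innerL_le' (x y : X) : ‖hX.innerL x y‖ ≤ ‖x‖ * ‖y‖ := by
  refine (sq_le_sq₀ (norm_nonneg _) (by positivity)).1 ?_
  obtain ⟨b, hb⟩ := hX.innerR_self_nonneg y
  have h1 : hX.innerL x y * star (hX.innerL x y) =
      hX.innerL (hX.smulR x (star b)) (hX.smulR x (star b)) := by
    rw [hX.star_innerL, ← hX.innerL_smulL, hX.compat, hb, ← star_star (hX.innerL _ x),
      hX.star_innerL, hX.innerL_smulR, star_star, ← hX.smulR_mul, hX.star_innerL,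
      hX.innerL_smulR, star_mul, star_star]
  have hy : ‖y‖ ^ 2 = ‖star b‖ ^ 2 := by
    rw [hX.norm_innerR_self, hb, CStarRing.norm_star_mul_self, norm_star, sq]
  rw [sq, ← CStarRing.norm_self_mul_star, h1, ← hX.norm_innerL_self, mul_pow, hy, ← mul_pow]
  exact pow_le_pow_left₀ (norm_nonneg _) (hX.norm_smulR_le' x _) 2

/-- `X · B` is dense in `X`, in sequential form. -/
lemma exists_seq_right (x : X) :
    ∃ b : ℕ → B, Tendsto (fun n => hX.smulR x (b n)) atTop (𝓝 x) := by
  have key (n : ℕ) : ∃ b : B, ‖x - hX.smulR x b‖ ^ 2 ≤ 2 * (1 / ((n : ℝ) + 1)) := by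
    obtain ⟨b, hb, hb'⟩ := exists_approx_unit (hX.innerR x x) _ (Nat.one_div_pos_of_nat (n := n))
    refine ⟨b, ?_⟩
    rw [hX.norm_innerR_self, innerR_sub_left', innerR_sub_right', innerR_sub_right',
      hX.innerR_smulR, hX.innerR_smulR, innerR_smulR_left', mul_assoc, ← mul_sub]
    refine (norm_sub_le _ _).trans ?_
    have := norm_mul_le (star b) (hX.innerR x x - hX.innerR x x * b)
    rw [norm_star] at this
    nlinarith [norm_nonneg (hX.innerR x x - hX.innerR x x * b)]
  choose b hb using key
  refine ⟨b, ?_⟩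
  have h2 : Tendsto (fun n => ‖x - hX.smulR x (b n)‖ ^ 2) atTop (𝓝 0) :=
    squeeze_zero (fun _ => by positivity) hb
      (by simpa using (tendsto_one_div_add_atTop_nhds_zero_nat (𝕜 := ℝ)).const_mul 2)
  have h3 := h2.sqrt
  simp only [Real.sqrt_sq (norm_nonneg _), Real.sqrt_zero] at h3
  rw [tendsto_iff_norm_sub_tendsto_zero]
  simpa only [norm_sub_rev] using h3

/-- The left action of `A` separates the points of `X`. -/
lemma ext_left' {x y : X} (h : ∀ a, hX.smulL a x = hX.smulL a y) : x = y := by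
  rw [← sub_eq_zero, ← norm_eq_zero]
  have h0 : hX.innerL (x - y) (x - y) * hX.innerL (x - y) (x - y) = 0 := by
    rw [← hX.innerL_smulL, smulL_sub', h, sub_self, ← sub_self (x - y), innerL_sub_left', sub_self]
  have h1 : star (hX.innerL (x - y) (x - y)) * hX.innerL (x - y) (x - y) = 0 := by
    rw [hX.star_innerL, h0]
  rw [CStarRing.star_mul_self_eq_zero_iff] at h1
  have := hX.norm_innerL_self (x - y)
  rw [h1, norm_zero] at this
  exact pow_eq_zero_iff two_ne_zero |>.1 this

lemma ext_right' {x y : X} (h : ∀ b, hX.smulR x b = hX.smulR y b) : x = y := by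
  obtain ⟨b, hb⟩ := hX.exists_seq_right (x - y)
  simp only [hX.sub_smulR', h, sub_self] at hb
  exact sub_eq_zero.1 (tendsto_nhds_unique hb tendsto_const_nhds)

end HilbertBimodule

lemma cauchySeq_of_dist_le {Y Z : Type*} [PseudoMetricSpace Y] [PseudoMetricSpace Z]
    {y : ℕ → Y} {z : ℕ → Z} (hy : CauchySeq y) (C : ℝ)
    (h : ∀ m n, dist (z m) (z n) ≤ C * dist (y m) (y n)) : CauchySeq z := by
  rw [Metric.cauchySeq_iff] at hy ⊢
  intro ε hε
  have hC : 0 < |C| + 1 := by positivity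
  obtain ⟨N, hN⟩ := hy (ε / (|C| + 1)) (div_pos hε hC)
  refine ⟨N, fun m hm n hn => (h m n).trans_lt ?_⟩
  have := hN m hm n hn
  rw [lt_div_iff₀ hC] at this
  nlinarith [le_abs_self C, dist_nonneg (x := y m) (y := y n)]

/-! ### The actions of `M(A)` and `M(B)` on `X` -/

namespace MultiplierBimodule
variable {hX : HilbertBimodule A B X} {MX : Type*} [NormedAddCommGroup MX] [NormedSpace ℂ MX]
  (mX : MultiplierBimodule hX MX)

lemma smulL_sub' (n : 𝓜(ℂ, A)) (m m' : MX) :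
    mX.smulL n (m - m') = mX.smulL n m - mX.smulL n m' :=
  eq_sub_of_add_eq (by rw [← mX.smulL_add, sub_add_cancel])

lemma sub_smulR' (m m' : MX) (n : 𝓜(ℂ, B)) :
    mX.smulR (m - m') n = mX.smulR m n - mX.smulR m' n :=
  eq_sub_of_add_eq (by rw [← mX.add_smulR, sub_add_cancel])

lemma innerR_smulR_left' (m m' : MX) (n : 𝓜(ℂ, B)) :
    mX.innerR (mX.smulR m n) m' = star n * mX.innerR m m' := by
  rw [← mX.star_innerR, mX.innerR_smulR, star_mul, mX.star_innerR]

lemma innerL_smulL_right' (n : 𝓜(ℂ, A)) (m m' : MX) :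
    mX.innerL m (mX.smulL n m') = mX.innerL m m' * star n := by
  rw [← mX.star_innerL, mX.innerL_smulL, star_mul, mX.star_innerL]

/-- A norm estimate inside `X`, read off from the `A`-valued inner product. -/
lemma norm_sq_smulL {n : 𝓜(ℂ, A)} {z w : X} (h : mX.embed z = mX.smulL n (mX.embed w)) :
    ‖z‖ ^ 2 ≤ ‖n * (hX.innerL w w : 𝓜(ℂ, A))‖ * ‖n‖ := by
  rw [hX.norm_innerL_self, ← norm_coe', ← mX.embed_innerL, h, mX.innerL_smulL,
    innerL_smulL_right', mX.embed_innerL, ← mul_assoc, ← norm_star n]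
  exact norm_mul_le _ _

lemma norm_sq_smulR {n : 𝓜(ℂ, B)} {z w : X} (h : mX.embed z = mX.smulR (mX.embed w) n) :
    ‖z‖ ^ 2 ≤ ‖(hX.innerR w w : 𝓜(ℂ, B)) * n‖ * ‖n‖ := by
  rw [hX.norm_innerR_self, ← norm_coe', ← mX.embed_innerR, h, mX.innerR_smulR,
    innerR_smulR_left', mX.embed_innerR, mul_assoc, mul_comm, ← norm_star n]
  exact norm_mul_le _ _

lemma norm_smulL_le' {n : 𝓜(ℂ, A)} {z w : X} (h : mX.embed z = mX.smulL n (mX.embed w)) :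
    ‖z‖ ≤ ‖n‖ * ‖w‖ := by
  refine (sq_le_sq₀ (norm_nonneg _) (by positivity)).1 ((mX.norm_sq_smulL h).trans ?_)
  have := norm_mul_le n (hX.innerL w w : 𝓜(ℂ, A))
  rw [norm_coe', ← hX.norm_innerL_self] at this
  nlinarith [norm_nonneg n]

lemma norm_smulR_le' {n : 𝓜(ℂ, B)} {z w : X} (h : mX.embed z = mX.smulR (mX.embed w) n) :
    ‖z‖ ≤ ‖w‖ * ‖n‖ := by
  refine (sq_le_sq₀ (norm_nonneg _) (by positivity)).1 ((mX.norm_sq_smulR h).trans ?_)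
  have := norm_mul_le (hX.innerR w w : 𝓜(ℂ, B)) n
  rw [norm_coe', ← hX.norm_innerR_self] at this
  nlinarith [norm_nonneg n]

/-- `M(A) · X ⊆ X`: for `x = lim x b_k`, the elements `n · (x b_k)` lie in `M(X) · B ⊆ X`, and they
converge in `X`.  The limit is identified after multiplication by elements of `B`, as nothing is
known about the continuity of the operations for the norm of `MX`. -/
lemma exists_lm (n : 𝓜(ℂ, A)) (x : X) : ∃ z, mX.embed z = mX.smulL n (mX.embed x) := by
  obtain ⟨b, hb⟩ := hX.exists_seq_right x
  choose z hz using fun c : B => mX.smulR_coe_mem (mX.smulL n (mX.embed x)) c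
  have hz' (c) : mX.embed (z c) = mX.smulL n (mX.embed (hX.smulR x c)) := by
    rw [hz, mX.smulL_smulR, mX.embed_smulR]
  have hcau : CauchySeq fun k => z (b k) := by
    refine cauchySeq_of_dist_le hb.cauchySeq ‖n‖ fun k l => ?_
    rw [dist_eq_norm, dist_eq_norm]
    exact mX.norm_smulL_le' (by rw [map_sub, map_sub, hz', hz', smulL_sub'])
  obtain ⟨w, hw⟩ := cauchySeq_tendsto_of_complete hcau
  refine ⟨w, mX.ext_right _ _ fun c => ?_⟩
  rw [mX.embed_smulR, ← hz]
  congr 1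
  have h1 : Tendsto (fun k => hX.smulR (z (b k)) c) atTop (𝓝 (hX.smulR w c)) := by
    rw [tendsto_iff_norm_sub_tendsto_zero] at hw ⊢
    refine squeeze_zero (fun _ => norm_nonneg _) (fun k => ?_) (by simpa using hw.mul_const ‖c‖)
    rw [← hX.sub_smulR']
    exact hX.norm_smulR_le' _ _
  refine tendsto_nhds_unique h1 ?_
  rw [tendsto_iff_norm_sub_tendsto_zero] at hb ⊢
  refine squeeze_zero (fun _ => norm_nonneg _) (fun k => ?_)
    (by simpa using (hb.mul_const ‖c‖).const_mul ‖n‖)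
  refine (mX.norm_smulL_le' (n := n) (w := hX.smulR (hX.smulR x (b k) - x) c) ?_).trans
    (mul_le_mul_of_nonneg_left (hX.norm_smulR_le' _ _) (norm_nonneg _))
  rw [map_sub, ← mX.embed_smulR, hz', hz', mX.smulL_smulR, mX.embed_smulR, hX.sub_smulR', map_sub,
    smulL_sub']

/-- `X · M(B) ⊆ X`. -/
lemma exists_rm (x : X) (n : 𝓜(ℂ, B)) : ∃ z, mX.embed z = mX.smulR (mX.embed x) n := by
  obtain ⟨b, hb⟩ := hX.exists_seq_right x
  have hz (k) : mX.embed (hX.smulR x (n.snd (b k))) =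
      mX.smulR (mX.embed (hX.smulR x (b k))) n := by
    rw [← mX.embed_smulR, ← mX.embed_smulR, ← mX.smulR_mul, coe_mul_mult]
  have hcau : CauchySeq fun k => hX.smulR x (n.snd (b k)) := by
    refine cauchySeq_of_dist_le hb.cauchySeq ‖n‖ fun k l => ?_
    rw [dist_eq_norm, dist_eq_norm, mul_comm]
    exact mX.norm_smulR_le' (by rw [map_sub, map_sub, hz, hz, sub_smulR'])
  obtain ⟨w, hw⟩ := cauchySeq_tendsto_of_complete hcau
  have hcont (c : B) {y : ℕ → X} {y₀ : X} (hy : Tendsto y atTop (𝓝 y₀)) :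
      Tendsto (fun k => hX.smulR (y k) c) atTop (𝓝 (hX.smulR y₀ c)) := by
    rw [tendsto_iff_norm_sub_tendsto_zero] at hy ⊢
    refine squeeze_zero (fun _ => norm_nonneg _) (fun k => ?_) (by simpa using hy.mul_const ‖c‖)
    rw [← hX.sub_smulR']
    exact hX.norm_smulR_le' _ _
  refine ⟨w, mX.ext_right _ _ fun c => ?_⟩
  rw [mX.embed_smulR, ← mX.smulR_mul, mul_coe', mX.embed_smulR]
  congr 1
  refine tendsto_nhds_unique (hcont c hw) ?_
  have := hcont (n.fst c) hb
  simpa only [← hX.smulR_mul, n.central] using this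

/-- The left action of `M(A)` on `X`, i.e. the restriction to `X` of the action on `M(X)`.  The chosen
element is unique because `embed` is injective. -/
def lm (n : 𝓜(ℂ, A)) (x : X) : X := (mX.exists_lm n x).choose

/-- The right action of `M(B)` on `X`, i.e. the restriction to `X` of the action on `M(X)`. -/
def rm (x : X) (n : 𝓜(ℂ, B)) : X := (mX.exists_rm x n).choose

lemma embed_lm (n : 𝓜(ℂ, A)) (x : X) : mX.embed (mX.lm n x) = mX.smulL n (mX.embed x) :=
  (mX.exists_lm n x).choose_spec

lemma embed_rm (x : X) (n : 𝓜(ℂ, B)) : mX.embed (mX.rm x n) = mX.smulR (mX.embed x) n :=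
  (mX.exists_rm x n).choose_spec

lemma lm_add (n : 𝓜(ℂ, A)) (x y : X) : mX.lm n (x + y) = mX.lm n x + mX.lm n y :=
  mX.embed_injective (by simp only [embed_lm, map_add, mX.smulL_add])

lemma add_lm (n n' : 𝓜(ℂ, A)) (x : X) : mX.lm (n + n') x = mX.lm n x + mX.lm n' x :=
  mX.embed_injective (by simp only [embed_lm, map_add, mX.add_smulL])

lemma rm_add (x : X) (n n' : 𝓜(ℂ, B)) : mX.rm x (n + n') = mX.rm x n + mX.rm x n' :=
  mX.embed_injective (by simp only [embed_rm, map_add, mX.smulR_add])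

lemma add_rm (x y : X) (n : 𝓜(ℂ, B)) : mX.rm (x + y) n = mX.rm x n + mX.rm y n :=
  mX.embed_injective (by simp only [embed_rm, map_add, mX.add_smulR])

lemma lm_mul (n n' : 𝓜(ℂ, A)) (x : X) : mX.lm (n * n') x = mX.lm n (mX.lm n' x) :=
  mX.embed_injective (by simp only [embed_lm, mX.smulL_mul])

lemma rm_mul (x : X) (n n' : 𝓜(ℂ, B)) : mX.rm x (n * n') = mX.rm (mX.rm x n) n' :=
  mX.embed_injective (by simp only [embed_rm, mX.smulR_mul])

lemma lm_rm (n : 𝓜(ℂ, A)) (x : X) (n' : 𝓜(ℂ, B)) :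
    mX.rm (mX.lm n x) n' = mX.lm n (mX.rm x n') :=
  mX.embed_injective (by simp only [embed_lm, embed_rm, mX.smulL_smulR])

lemma lm_one (x : X) : mX.lm 1 x = x :=
  mX.embed_injective (by simp only [embed_lm, mX.smulL_one])

lemma rm_one (x : X) : mX.rm x 1 = x :=
  mX.embed_injective (by simp only [embed_rm, mX.smulR_one])

lemma lm_coe (a : A) (x : X) : mX.lm a x = hX.smulL a x :=
  mX.embed_injective (by rw [embed_lm, mX.embed_smulL])

lemma rm_coe (x : X) (b : B) : mX.rm x b = hX.smulR x b :=
  mX.embed_injective (by rw [embed_rm, mX.embed_smulR])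

lemma norm_lm_le (n : 𝓜(ℂ, A)) (x : X) : ‖mX.lm n x‖ ≤ ‖n‖ * ‖x‖ :=
  mX.norm_smulL_le' (mX.embed_lm n x)

lemma norm_rm_le (x : X) (n : 𝓜(ℂ, B)) : ‖mX.rm x n‖ ≤ ‖x‖ * ‖n‖ :=
  mX.norm_smulR_le' (mX.embed_rm x n)

/-- Scalars are compatible with the action of `M(A)`: this is not among the laws of `M(X)`, but
follows by testing against `A`. -/
lemma smul_lm (c : ℂ) (n : 𝓜(ℂ, A)) (x : X) : mX.lm (c • n) x = c • mX.lm n x :=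
  hX.ext_left' fun a => by
    rw [hX.csmul_smulL, ← mX.lm_coe, ← mX.lm_coe, ← lm_mul, ← lm_mul, mul_smul_comm, coe_mul_mult,
      ← coe_smul', lm_coe, lm_coe, hX.smulL_csmul]

lemma rm_smul (c : ℂ) (n : 𝓜(ℂ, B)) (x : X) : mX.rm x (c • n) = c • mX.rm x n :=
  hX.ext_right' fun b => by
    rw [hX.smulR_csmul, ← mX.rm_coe, ← mX.rm_coe, ← rm_mul, ← rm_mul, smul_mul_assoc, mul_coe',
      ← coe_smul', rm_coe, rm_coe, hX.csmul_smulR]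

/-- `n ↦ n · x` as a linear map. -/
def lmL (x : X) : 𝓜(ℂ, A) →ₗ[ℂ] X where
  toFun n := mX.lm n x
  map_add' n n' := mX.add_lm n n' x
  map_smul' c n := mX.smul_lm c n x

/-- `n ↦ x · n` as a linear map. -/
def rmL (x : X) : 𝓜(ℂ, B) →ₗ[ℂ] X where
  toFun n := mX.rm x n
  map_add' n n' := mX.rm_add x n n'
  map_smul' c n := mX.rm_smul c n x

lemma zero_lm (x : X) : mX.lm 0 x = 0 := map_zero (mX.lmL x)
lemma rm_zero (x : X) : mX.rm x 0 = 0 := map_zero (mX.rmL x)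

/-- Left multiplication by `n` as an additive map on `X`. -/
def lmA (n : 𝓜(ℂ, A)) : X →+ X := AddMonoidHom.mk' (mX.lm n) (mX.lm_add n)

/-- Right multiplication by `n` as an additive map on `X`. -/
def rmA (n : 𝓜(ℂ, B)) : X →+ X := AddMonoidHom.mk' (fun x => mX.rm x n) fun x y => mX.add_rm x y n

lemma lm_sub (n : 𝓜(ℂ, A)) (x y : X) : mX.lm n (x - y) = mX.lm n x - mX.lm n y :=
  map_sub (mX.lmA n) x y

lemma sub_rm (x y : X) (n : 𝓜(ℂ, B)) : mX.rm (x - y) n = mX.rm x n - mX.rm y n :=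
  map_sub (mX.rmA n) x y

lemma rm_sub (x : X) (n n' : 𝓜(ℂ, B)) : mX.rm x (n - n') = mX.rm x n - mX.rm x n' :=
  map_sub (mX.rmL x) n n'

lemma sub_lm (n n' : 𝓜(ℂ, A)) (x : X) : mX.lm (n - n') x = mX.lm n x - mX.lm n' x :=
  map_sub (mX.lmL x) n n'

lemma innerR_lm (n : 𝓜(ℂ, A)) (x y : X) :
    hX.innerR (mX.lm n x) y = hX.innerR x (mX.lm (star n) y) :=
  coe_injective' (by
    simp only [← mX.embed_innerR, embed_lm, mX.innerR_smulL])

lemma innerL_rm (x y : X) (n : 𝓜(ℂ, B)) :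
    hX.innerL (mX.rm x n) y = hX.innerL x (mX.rm y (star n)) :=
  coe_injective' (by
    simp only [← mX.embed_innerL, embed_rm, mX.innerL_smulR])

lemma coe_innerR_rm (x y : X) (n : 𝓜(ℂ, B)) :
    (hX.innerR x (mX.rm y n) : 𝓜(ℂ, B)) = (hX.innerR x y : 𝓜(ℂ, B)) * n := by
  simp only [← mX.embed_innerR, embed_rm, mX.innerR_smulR]

lemma coe_innerR_rm_left (x y : X) (n : 𝓜(ℂ, B)) :
    (hX.innerR (mX.rm x n) y : 𝓜(ℂ, B)) = star n * (hX.innerR x y : 𝓜(ℂ, B)) := by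
  simp only [← mX.embed_innerR, embed_rm, mX.innerR_smulR_left']

lemma coe_innerL_lm (n : 𝓜(ℂ, A)) (x y : X) :
    (hX.innerL (mX.lm n x) y : 𝓜(ℂ, A)) = n * (hX.innerL x y : 𝓜(ℂ, A)) := by
  simp only [← mX.embed_innerL, embed_lm, mX.innerL_smulL]

lemma coe_innerL_lm_right (n : 𝓜(ℂ, A)) (x y : X) :
    (hX.innerL x (mX.lm n y) : 𝓜(ℂ, A)) = (hX.innerL x y : 𝓜(ℂ, A)) * star n := by
  simp only [← mX.embed_innerL, embed_lm, mX.innerL_smulL_right']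

lemma tendsto_lm (n : 𝓜(ℂ, A)) {y : ℕ → X} {y₀ : X} (hy : Tendsto y atTop (𝓝 y₀)) :
    Tendsto (fun k => mX.lm n (y k)) atTop (𝓝 (mX.lm n y₀)) := by
  have : Continuous (mX.lmA n) := AddMonoidHomClass.continuous_of_bound _ ‖n‖ (mX.norm_lm_le n)
  exact (this.tendsto _).comp hy

lemma tendsto_rm (n : 𝓜(ℂ, B)) {y : ℕ → X} {y₀ : X} (hy : Tendsto y atTop (𝓝 y₀)) :
    Tendsto (fun k => mX.rm (y k) n) atTop (𝓝 (mX.rm y₀ n)) := by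
  have : Continuous (mX.rmA n) := AddMonoidHomClass.continuous_of_bound _ ‖n‖
    fun x => (mX.norm_rm_le x n).trans_eq (mul_comm _ _)
  exact (this.tendsto _).comp hy

end MultiplierBimodule
end Hilbert

/-! ### Amplification in the bimodule -/

section Corner
open Filter Topology Finset Submodule
variable {A B X MX : Type*} [NonUnitalCStarAlgebra A] [NonUnitalCStarAlgebra B]
  [NormedAddCommGroup X] [NormedSpace ℂ X] [CompleteSpace X]
  [NormedAddCommGroup MX] [NormedSpace ℂ MX] {hX : HilbertBimodule A B X}

lemma HilbertBimodule.tendsto_innerR_right (hX : HilbertBimodule A B X) (x : X) {y : ℕ → X} {y₀ : X}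
    (hy : Tendsto y atTop (𝓝 y₀)) :
    Tendsto (fun n => hX.innerR x (y n)) atTop (𝓝 (hX.innerR x y₀)) := by
  rw [tendsto_iff_norm_sub_tendsto_zero] at hy ⊢
  refine squeeze_zero (fun _ => norm_nonneg _) (fun k => ?_) (by simpa using hy.const_mul ‖x‖)
  rw [← hX.innerR_sub_right']
  exact hX.norm_innerR_le' _ _

lemma HilbertBimodule.tendsto_innerR_left (hX : HilbertBimodule A B X) (x : X) {y : ℕ → X} {y₀ : X}
    (hy : Tendsto y atTop (𝓝 y₀)) :
    Tendsto (fun n => hX.innerR (y n) x) atTop (𝓝 (hX.innerR y₀ x)) := by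
  simpa only [hX.star_innerR] using (hX.tendsto_innerR_right x hy).star

lemma HilbertBimodule.tendsto_innerL_right (hX : HilbertBimodule A B X) (x : X) {y : ℕ → X} {y₀ : X}
    (hy : Tendsto y atTop (𝓝 y₀)) :
    Tendsto (fun n => hX.innerL x (y n)) atTop (𝓝 (hX.innerL x y₀)) := by
  rw [tendsto_iff_norm_sub_tendsto_zero] at hy ⊢
  refine squeeze_zero (fun _ => norm_nonneg _) (fun k => ?_) (by simpa using hy.const_mul ‖x‖)
  rw [← hX.innerL_sub_right']
  exact hX.norm_innerL_le' _ _

/-- `⟨x, ·⟩_B` as an additive map. -/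
def HilbertBimodule.innerRA (hX : HilbertBimodule A B X) (x : X) : X →+ B :=
  AddMonoidHom.mk' (hX.innerR x) (hX.innerR_add_right x)

/-- `⟨x, ·⟩_A` as an additive map. -/
def HilbertBimodule.innerLA (hX : HilbertBimodule A B X) (x : X) : X →+ A :=
  AddMonoidHom.mk' (hX.innerL x) fun y z => by
    rw [← hX.star_innerL, hX.innerL_add_left, star_add, hX.star_innerL, hX.star_innerL]

namespace MultiplierBimodule
variable (mX : MultiplierBimodule hX MX)

/-- The truncated amplification `∑_{i < n} e i 0 · y · f 0 i` of `y`: the `n × n` block diagonal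
matrix with `y` on the diagonal. -/
def ampX (e : ℕ → ℕ → 𝓜(ℂ, A)) (f : ℕ → ℕ → 𝓜(ℂ, B)) (y : X) (n : ℕ) : X :=
  ∑ i ∈ range n, mX.rm (mX.lm (e i 0) y) (f 0 i)

section
variable {e : ℕ → ℕ → 𝓜(ℂ, A)} {f : ℕ → ℕ → 𝓜(ℂ, B)}

lemma lm_ampX (he : IsMU e) (y : X) (n i j : ℕ) : mX.lm (e i j) (mX.ampX e f y n) =
    if j < n then mX.rm (mX.lm (e i 0) y) (f 0 j) else 0 := by
  change mX.lmA (e i j) _ = _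
  rw [ampX, map_sum]
  change ∑ l ∈ range n, mX.lm (e i j) (mX.rm (mX.lm (e l 0) y) (f 0 l)) = _
  have h (l : ℕ) : mX.lm (e i j) (mX.rm (mX.lm (e l 0) y) (f 0 l)) =
      if j = l then mX.rm (mX.lm (e i 0) y) (f 0 l) else 0 := by
    rw [← mX.lm_rm, ← mX.lm_mul, he.mul_eq]
    split_ifs
    · rfl
    · rw [mX.zero_lm]
      exact map_zero (mX.rmA _)
  simp only [h, sum_ite_eq, mem_range]

lemma ampX_rm (hf : IsMU f) (y : X) (n i j : ℕ) : mX.rm (mX.ampX e f y n) (f i j) =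
    if i < n then mX.rm (mX.lm (e i 0) y) (f 0 j) else 0 := by
  change mX.rmA (f i j) _ = _
  rw [ampX, map_sum]
  change ∑ l ∈ range n, mX.rm (mX.rm (mX.lm (e l 0) y) (f 0 l)) (f i j) = _
  have h (l : ℕ) : mX.rm (mX.rm (mX.lm (e l 0) y) (f 0 l)) (f i j) =
      if i = l then mX.rm (mX.lm (e l 0) y) (f 0 j) else 0 := by
    rw [← mX.rm_mul, hf.mul_eq, eq_comm]
    split_ifs with h1 h2 h2
    · rfl
    · exact absurd h1.symm h2
    · exact absurd h2.symm h1
    · rw [mX.rm_zero]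
  simp only [h, sum_ite_eq, mem_range]

lemma lm_proj_ampX (he : IsMU e) (y : X) {m n : ℕ} (h : m ≤ n) :
    mX.lm (proj e m) (mX.ampX e f y n) = mX.ampX e f y m := by
  change mX.lmL _ (∑ i ∈ range m, e i i) = _
  rw [map_sum, ampX]
  refine sum_congr rfl fun i hi => ?_
  exact (mX.lm_ampX he y n i i).trans (if_pos ((mem_range.1 hi).trans_le h))

lemma ampX_rm_proj (hf : IsMU f) (y : X) {m n : ℕ} (h : m ≤ n) :
    mX.rm (mX.ampX e f y n) (proj f m) = mX.ampX e f y m := by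
  change mX.rmL _ (∑ i ∈ range m, f i i) = _
  rw [map_sum, ampX]
  refine sum_congr rfl fun i hi => ?_
  exact (mX.ampX_rm hf y n i i).trans (if_pos ((mem_range.1 hi).trans_le h))

/-- Amplification is contractive, because `⟨Yₙ, Yₙ⟩_B` is the amplification of a corner of
`⟨y, y⟩_B`. -/
lemma norm_ampX_le (he : IsMU e) (hf : IsMU f) (y : X) (n : ℕ) : ‖mX.ampX e f y n‖ ≤ ‖y‖ := by
  have key : (hX.innerR (mX.ampX e f y n) (mX.ampX e f y n) : 𝓜(ℂ, B)) =
      amp f n (hX.innerR (mX.lm (e 0 0) y) y : 𝓜(ℂ, B)) := by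
    set Y := mX.ampX e f y n with hY
    have h1 : hX.innerR Y Y = ∑ j ∈ range n, hX.innerR Y (mX.rm (mX.lm (e j 0) y) (f 0 j)) := by
      change hX.innerRA Y Y = _
      conv_lhs => rw [hY, ampX, map_sum]
      rfl
    have h2 : (hX.innerR Y Y : 𝓜(ℂ, B)) =
        ∑ j ∈ range n, (hX.innerR Y (mX.rm (mX.lm (e j 0) y) (f 0 j)) : 𝓜(ℂ, B)) := by
      rw [h1]
      exact map_sum (AddMonoidHom.mk' (fun b : B => (b : 𝓜(ℂ, B))) coe_add') _ _
    rw [h2, amp]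
    refine sum_congr rfl fun j hj => ?_
    rw [mX.coe_innerR_rm, ← he.star_eq, ← mX.innerR_lm, hY, mX.lm_ampX he, if_pos (mem_range.1 hj), mX.coe_innerR_rm_left, hf.star_eq]
  refine (sq_le_sq₀ (norm_nonneg _) (norm_nonneg _)).1 ?_
  rw [hX.norm_innerR_self, ← norm_coe', key]
  refine (hf.norm_amp_le n _).trans ?_
  rw [norm_coe', sq]
  refine (hX.norm_innerR_le' _ _).trans (mul_le_mul_of_nonneg_right ?_ (norm_nonneg _))
  exact (mX.norm_lm_le _ _).trans (mul_le_of_le_one_left (norm_nonneg _) (he.norm_le_one 0 0))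

lemma cauchySeq_ampX_rm (he : IsMU e) (hf : IsMU f) (y : X)
    {w : 𝓜(ℂ, B)} (hw : Tendsto (fun n => proj f n * w) atTop (𝓝 w)) :
    CauchySeq fun n => mX.rm (mX.ampX e f y n) w := by
  refine cauchySeq_of_le_tendsto_0' (fun n => ‖y‖ * ‖w - proj f n * w‖) (fun m n hmn => ?_) ?_
  · rw [dist_comm, dist_eq_norm, ← mX.ampX_rm_proj hf y hmn, ← mX.rm_mul, ← mX.rm_sub]
    exact (mX.norm_rm_le _ _).trans
      (mul_le_mul_of_nonneg_right (mX.norm_ampX_le he hf y n) (norm_nonneg _))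
  · simpa using ((tendsto_const_nhds (x := w)).sub hw).norm.const_mul ‖y‖

lemma cauchySeq_innerR_ampX (he : IsMU e) (hf : IsMU f) (y : X)
    {x : X} (hx : Tendsto (fun n => mX.lm (proj e n) x) atTop (𝓝 x)) :
    CauchySeq fun n => hX.innerR (mX.ampX e f y n) x := by
  refine cauchySeq_of_le_tendsto_0' (fun n => ‖y‖ * ‖x - mX.lm (proj e n) x‖)
    (fun m n hmn => ?_) ?_
  · rw [dist_comm, dist_eq_norm, ← mX.lm_proj_ampX he y hmn, mX.innerR_lm, he.star_proj,
      ← hX.innerR_sub_right']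
    exact (hX.norm_innerR_le' _ _).trans
      (mul_le_mul_of_nonneg_right (mX.norm_ampX_le he hf y n) (norm_nonneg _))
  · simpa using ((tendsto_const_nhds (x := x)).sub hx).norm.const_mul ‖y‖

end

variable {K : Type*} [NonUnitalCStarAlgebra K] (u : MatrixUnits K)
  {ι : K →⋆ₙₐ[ℂ] 𝓜(ℂ, A)} {ζ : K →⋆ₙₐ[ℂ] 𝓜(ℂ, B)}

/-- The norm of `(1 - P) · x` is estimated through `(1 - P)⟨x, x⟩_A`, which tends to zero. -/
lemma tendsto_lm_proj (hι : Nondegenerate ι) (x : X) :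
    Tendsto (fun n => mX.lm (proj (mu u ι) n) x) atTop (𝓝 x) := by
  have he := isMU_mu u ι
  set P := proj (mu u ι)
  have h0 := ((tendsto_const_nhds (x := (hX.innerL x x : 𝓜(ℂ, A)))).sub
    (tendsto_proj_coe u ι hι (hX.innerL x x))).norm.mul_const 2
  have h2 : Tendsto (fun n => ‖x - mX.lm (P n) x‖ ^ 2) atTop (𝓝 0) := by
    refine squeeze_zero (fun _ => by positivity) (fun n => ?_) (by simpa using h0)
    have h3 := mX.norm_sq_smulL (mX.embed_lm (1 - P n) x)
    rw [mX.sub_lm, mX.lm_one, sub_mul, one_mul] at h3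
    refine h3.trans (mul_le_mul_of_nonneg_left ?_ (norm_nonneg _))
    have h4 : ‖(1 : 𝓜(ℂ, A))‖ ≤ 1 := by
      have h := CStarRing.norm_star_mul_self (x := (1 : 𝓜(ℂ, A)))
      rw [star_one, mul_one] at h
      nlinarith [norm_nonneg (1 : 𝓜(ℂ, A))]
    exact (norm_sub_le _ _).trans (by linarith [he.norm_proj_le n])
  have h3 := h2.sqrt
  simp only [Real.sqrt_sq (norm_nonneg _), Real.sqrt_zero] at h3
  rw [tendsto_iff_norm_sub_tendsto_zero]
  simpa only [norm_sub_rev] using h3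

lemma tendsto_rm_proj (hζ : Nondegenerate ζ) (x : X) :
    Tendsto (fun n => mX.rm x (proj (mu u ζ) n)) atTop (𝓝 x) := by
  have he := isMU_mu u ζ
  set P := proj (mu u ζ)
  have h0 := ((tendsto_const_nhds (x := (hX.innerR x x : 𝓜(ℂ, B)))).sub
    (tendsto_coe_proj u ζ hζ (hX.innerR x x))).norm.mul_const 2
  have h2 : Tendsto (fun n => ‖x - mX.rm x (P n)‖ ^ 2) atTop (𝓝 0) := by
    refine squeeze_zero (fun _ => by positivity) (fun n => ?_) (by simpa using h0)
    have h3 := mX.norm_sq_smulR (mX.embed_rm x (1 - P n))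
    rw [mX.rm_sub, mX.rm_one, mul_sub, mul_one] at h3
    refine h3.trans (mul_le_mul_of_nonneg_left ?_ (norm_nonneg _))
    have h4 : ‖(1 : 𝓜(ℂ, B))‖ ≤ 1 := by
      have h := CStarRing.norm_star_mul_self (x := (1 : 𝓜(ℂ, B)))
      rw [star_one, mul_one] at h
      nlinarith [norm_nonneg (1 : 𝓜(ℂ, B))]
    exact (norm_sub_le _ _).trans (by linarith [he.norm_proj_le n])
  have h3 := h2.sqrt
  simp only [Real.sqrt_sq (norm_nonneg _), Real.sqrt_zero] at h3
  rw [tendsto_iff_norm_sub_tendsto_zero]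
  simpa only [norm_sub_rev] using h3

/-- Every element of the corner `e₀₀ X f₀₀` is `m · f₀₀` for some `m ∈ C(X, ι, ζ)`, namely for its
infinite amplification, the strict limit of the truncated ones. -/
lemma exists_bimodRelComm_of_corner (hι : Nondegenerate ι) (hζ : Nondegenerate ζ) {y : X}
    (h1 : mX.lm (mu u ι 0 0) y = y) (h2 : mX.rm y (mu u ζ 0 0) = y) :
    ∃ m ∈ bimodRelComm ι ζ mX, mX.smulR m (mu u ζ 0 0) = mX.embed y := by
  have he := isMU_mu u ι
  have hf := isMU_mu u ζ
  set e := mu u ι with e_def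
  set f := mu u ζ with f_def
  set Y := mX.ampX e f y with hY
  choose F hF using fun b : B => cauchySeq_tendsto_of_complete
    (mX.cauchySeq_ampX_rm he hf y (tendsto_proj_coe u ζ hζ b))
  choose G hG using fun x : X => cauchySeq_tendsto_of_complete
    (mX.cauchySeq_innerR_ampX he hf y (mX.tendsto_lm_proj u hι x))
  choose Z hZ using fun k : K => cauchySeq_tendsto_of_complete
    (mX.cauchySeq_ampX_rm he hf y (tendsto_proj_hom u ζ k))
  obtain ⟨m, hm⟩ := mX.exists_of_adjointable F G
    (fun b b' => tendsto_nhds_unique (hF (b + b')) (by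
      simpa only [coe_add', mX.rm_add] using (hF b).add (hF b')))
    (fun b b' => tendsto_nhds_unique (hF (b * b')) (by
      simpa only [coe_mul', mX.rm_mul, ← mX.rm_coe] using mX.tendsto_rm b' (hF b)))
    (fun b x => tendsto_nhds_unique (hX.tendsto_innerR_left x (hF b)) (by
      simpa only [mX.rm_coe, hX.innerR_smulR_left'] using (hG x).const_mul (star b)))
  -- `m · ζ k` and `ι k · m` are both the limit `Z k` of `Y n · ζ k`, so `m` lies in the commutant.
  have hR (k : K) : mX.smulR m (ζ k) = mX.embed (Z k) := by
    refine mX.ext_right _ _ fun b => ?_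
    rw [← mX.smulR_mul, mul_coe', hm, mX.embed_smulR]
    congr 1
    refine tendsto_nhds_unique (hF _) ?_
    simpa only [← mul_coe', mX.rm_mul, mX.rm_coe] using mX.tendsto_rm b (hZ k)
  have hdiff (k : K) : Tendsto (fun n => mX.lm (ι k) (Y n) - mX.rm (Y n) (ζ k)) atTop (𝓝 0) := by
    let T : ℕ → K →ₗ[ℂ] X := fun n =>
      (mX.lmL (Y n)).comp (ι : K →ₗ[ℂ] 𝓜(ℂ, A)) - (mX.rmL (Y n)).comp (ζ : K →ₗ[ℂ] 𝓜(ℂ, B))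
    refine tendsto_zero_of_units u T (2 * ‖y‖) (fun n k => ?_) (fun i j => ?_) k
    · have h3 := mX.norm_ampX_le he hf y n
      have h4 := (mX.norm_lm_le (ι k) (Y n)).trans
        (mul_le_mul (norm_hom_le ι k) h3 (norm_nonneg _) (norm_nonneg _))
      have h5 := (mX.norm_rm_le (Y n) (ζ k)).trans
        (mul_le_mul h3 (norm_hom_le ζ k) (norm_nonneg _) (norm_nonneg _))
      refine (norm_sub_le (mX.lm (ι k) (Y n)) (mX.rm (Y n) (ζ k))).trans ?_
      linarith
    · refine tendsto_const_nhds.congr' ?_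
      filter_upwards [eventually_gt_atTop i, eventually_gt_atTop j] with n hi hj
      change 0 = mX.lm (e i j) (Y n) - mX.rm (Y n) (f i j)
      rw [hY, mX.lm_ampX he, mX.ampX_rm hf, if_pos hi, if_pos hj, sub_self]
  have hL (k : K) : mX.smulL (ι k) m = mX.embed (Z k) := by
    refine mX.ext_right _ _ fun b => ?_
    rw [mX.smulL_smulR, hm, mX.embed_smulR, ← mX.embed_lm]
    congr 1
    have h3 : Tendsto (fun n => mX.lm (ι k) (Y n)) atTop (𝓝 (Z k)) := by
      simpa [hY] using (hdiff k).add (hZ k)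
    refine tendsto_nhds_unique (mX.tendsto_lm (ι k) (hF b)) ?_
    simpa only [mX.lm_rm, mX.rm_coe] using mX.tendsto_rm b h3
  refine ⟨m, fun k => ⟨by rw [hL, hR], Z k, (hR k).symm⟩, ?_⟩
  rw [f_def, mu, hR]
  congr 1
  refine tendsto_nhds_unique (hZ _) (tendsto_const_nhds.congr' ?_)
  filter_upwards [eventually_gt_atTop 0] with n hn
  change y = mX.rm (Y n) (f 0 0)
  rw [hY, mX.ampX_rm hf, if_pos hn, h1, h2]

/-! ### Transfer of fullness -/

lemma innerR_comm {m m' : MX} (hm : m ∈ bimodRelComm ι ζ mX) (hm' : m' ∈ bimodRelComm ι ζ mX)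
    (k : K) : ζ k * mX.innerR m m' = mX.innerR m m' * ζ k := by
  rw [← mX.innerR_smulR, ← (hm' k).1, ← star_star (ι k), ← mX.innerR_smulL, ← map_star,
    (hm (star k)).1, mX.innerR_smulR_left', map_star, star_star]

lemma innerL_comm {m m' : MX} (hm : m ∈ bimodRelComm ι ζ mX) (hm' : m' ∈ bimodRelComm ι ζ mX)
    (k : K) : ι k * mX.innerL m m' = mX.innerL m m' * ι k := by
  rw [← mX.innerL_smulL, (hm k).1, mX.innerL_smulR, ← map_star,
    ← (hm' (star k)).1, mX.innerL_smulL_right', map_star, star_star]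

/-- An inner product `⟨x', y'⟩_B` of elements of `X f₀₀` is the limit of the sums
`∑ j < n, ⟨e 0 j · x', e 0 j · y'⟩_B`, whose terms only involve elements of `e₀₀ X f₀₀`; the latter
come from `C(X, ι, ζ)`. -/
theorem right_full_iff (u : MatrixUnits K) (hι : Nondegenerate ι) (hζ : Nondegenerate ζ) :
    closure (span ℂ {n : 𝓜(ℂ, B) | ∃ m ∈ bimodRelComm ι ζ mX,
        ∃ m' ∈ bimodRelComm ι ζ mX, n = mX.innerR m m'} : Set 𝓜(ℂ, B)) = relComm ζ ↔
      hX.RightFull := by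
  have he := isMU_mu u ι
  have hf := isMU_mu u ζ
  refine full_iff_of_corner u hζ _ _ ?_ ?_ ?_
  · rintro _ ⟨m, hm, m', hm', rfl⟩ k
    exact mX.innerR_comm hm hm' k
  · rintro _ ⟨m, hm, m', hm', rfl⟩ i j
    obtain ⟨x, hx⟩ := (hm (u.u 0 i)).2
    obtain ⟨y, hy⟩ := (hm' (u.u 0 j)).2
    refine ⟨_, ⟨x, y, rfl⟩, ?_⟩
    rw [← mX.embed_innerR, hx, hy, mX.innerR_smulR, mX.innerR_smulR_left', ← map_star, u.star_u]
    rfl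
  · rintro _ ⟨x, y, rfl⟩
    set e := mu u ι with e_def
    set f := mu u ζ with f_def
    set x' := mX.rm x (f 0 0)
    set y' := mX.rm y (f 0 0)
    have hx' : mX.rm x' (f 0 0) = x' := by rw [← mX.rm_mul, hf.mul_same]
    have hy' : mX.rm y' (f 0 0) = y' := by rw [← mX.rm_mul, hf.mul_same]
    have h0 : f 0 0 * (hX.innerR x y : 𝓜(ℂ, B)) * f 0 0 = (hX.innerR x' y' : 𝓜(ℂ, B)) := by
      rw [mX.coe_innerR_rm, mX.coe_innerR_rm_left, hf.star_eq]
    rw [h0]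
    have hlim : Tendsto (fun n => (hX.innerR x' (mX.lm (proj e n) y') : 𝓜(ℂ, B))) atTop
        (𝓝 (hX.innerR x' y' : 𝓜(ℂ, B))) :=
      (coe_isometry.continuous.tendsto _).comp
        (hX.tendsto_innerR_right x' (mX.tendsto_lm_proj u hι y'))
    refine mem_closure_of_tendsto hlim (Eventually.of_forall fun n => ?_)
    have hsum : (hX.innerR x' (mX.lm (proj e n) y') : 𝓜(ℂ, B)) =
        ∑ j ∈ range n, (hX.innerR x' (mX.lm (e j j) y') : 𝓜(ℂ, B)) :=
      map_sum ((AddMonoidHom.mk' (fun b : B => (b : 𝓜(ℂ, B))) coe_add').comp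
        ((hX.innerRA x').comp (mX.lmL y').toAddMonoidHom)) _ _
    rw [hsum]
    refine sum_mem fun j _ => ?_
    have hcor {z : X} (hz : mX.rm z (f 0 0) = z) := mX.exists_bimodRelComm_of_corner u hι hζ
      (y := mX.lm (e 0 j) z) (by rw [← mX.lm_mul, he.mul_same]) (by rw [mX.lm_rm, hz])
    obtain ⟨m, hm, hmx⟩ := hcor hx'
    obtain ⟨m', hm', hmy⟩ := hcor hy'
    refine ⟨mX.innerR m m', subset_span ⟨m, hm, m', hm', rfl⟩, ?_⟩
    rw [LinearMap.mulRight_apply]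
    calc mX.innerR m m' * f 0 0 = mX.innerR (mX.smulR m (f 0 0)) (mX.smulR m' (f 0 0)) := by
          rw [mX.innerR_smulR, mX.innerR_smulR_left', hf.star_eq, f_def, mu,
            mX.innerR_comm hm hm', mul_assoc, ← mu, hf.mul_same]
      _ = _ := by
          rw [hmx, hmy, mX.embed_innerR, mX.innerR_lm, he.star_eq, ← mX.lm_mul, he.mul_same]

/-- The mirror image: an inner product `⟨x', y'⟩_A` of elements of `e₀₀ X` is the limit of the sums
`∑ j < n, ⟨x' · f j 0, y' · f j 0⟩_A`. -/
theorem left_full_iff (u : MatrixUnits K) (hι : Nondegenerate ι) (hζ : Nondegenerate ζ) :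
    closure (span ℂ {n : 𝓜(ℂ, A) | ∃ m ∈ bimodRelComm ι ζ mX,
        ∃ m' ∈ bimodRelComm ι ζ mX, n = mX.innerL m m'} : Set 𝓜(ℂ, A)) = relComm ι ↔
      hX.LeftFull := by
  have he := isMU_mu u ι
  have hf := isMU_mu u ζ
  refine full_iff_of_corner u hι _ _ ?_ ?_ ?_
  · rintro _ ⟨m, hm, m', hm', rfl⟩ k
    exact mX.innerL_comm hm hm' k
  · rintro _ ⟨m, hm, m', hm', rfl⟩ i j
    obtain ⟨x, hx⟩ := (hm (u.u i 0)).2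
    obtain ⟨y, hy⟩ := (hm' (u.u j 0)).2
    refine ⟨_, ⟨x, y, rfl⟩, ?_⟩
    rw [← mX.embed_innerL, hx, hy, ← (hm _).1, ← (hm' _).1, mX.innerL_smulL,
      mX.innerL_smulL_right', ← map_star, u.star_u, mul_assoc]
    rfl
  · rintro _ ⟨x, y, rfl⟩
    set e := mu u ι with e_def
    set f := mu u ζ with f_def
    set x' := mX.lm (e 0 0) x
    set y' := mX.lm (e 0 0) y
    have hx' : mX.lm (e 0 0) x' = x' := by rw [← mX.lm_mul, he.mul_same]
    have hy' : mX.lm (e 0 0) y' = y' := by rw [← mX.lm_mul, he.mul_same]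
    have h0 : e 0 0 * (hX.innerL x y : 𝓜(ℂ, A)) * e 0 0 = (hX.innerL x' y' : 𝓜(ℂ, A)) := by
      rw [mX.coe_innerL_lm, mX.coe_innerL_lm_right, he.star_eq, mul_assoc]
    rw [h0]
    have hlim : Tendsto (fun n => (hX.innerL x' (mX.rm y' (proj f n)) : 𝓜(ℂ, A))) atTop
        (𝓝 (hX.innerL x' y' : 𝓜(ℂ, A))) :=
      (coe_isometry.continuous.tendsto _).comp
        (hX.tendsto_innerL_right x' (mX.tendsto_rm_proj u hζ y'))
    refine mem_closure_of_tendsto hlim (Eventually.of_forall fun n => ?_)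
    have hsum : (hX.innerL x' (mX.rm y' (proj f n)) : 𝓜(ℂ, A)) =
        ∑ j ∈ range n, (hX.innerL x' (mX.rm y' (f j j)) : 𝓜(ℂ, A)) :=
      map_sum ((AddMonoidHom.mk' (fun a : A => (a : 𝓜(ℂ, A))) coe_add').comp
        ((hX.innerLA x').comp (mX.rmL y').toAddMonoidHom)) _ _
    rw [hsum]
    refine sum_mem fun j _ => ?_
    have hcor {z : X} (hz : mX.lm (e 0 0) z = z) := mX.exists_bimodRelComm_of_corner u hι hζ
      (y := mX.rm z (f j 0)) (by rw [← mX.lm_rm, hz]) (by rw [← mX.rm_mul, hf.mul_same])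
    obtain ⟨m, hm, hmx⟩ := hcor hx'
    obtain ⟨m', hm', hmy⟩ := hcor hy'
    refine ⟨mX.innerL m m', subset_span ⟨m, hm, m', hm', rfl⟩, ?_⟩
    rw [LinearMap.mulRight_apply]
    calc mX.innerL m m' * e 0 0 = mX.innerL (mX.smulL (e 0 0) m) (mX.smulL (e 0 0) m') := by
          rw [mX.innerL_smulL, mX.innerL_smulL_right', he.star_eq, ← mul_assoc, e_def, mu,
            mX.innerL_comm hm hm', mul_assoc, ← mu, he.mul_same]
      _ = mX.innerL (mX.smulR m (f 0 0)) (mX.smulR m' (f 0 0)) := by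
          rw [e_def, f_def, mu, mu, (hm _).1, (hm' _).1]
      _ = _ := by
          rw [hmx, hmy, mX.embed_innerL, mX.innerL_rm, hf.star_eq, ← mX.rm_mul, hf.mul_same]

end MultiplierBimodule
end Corner

/-- Let `(A, ι)` and `(B, ζ)` be `𝒦`-algebras and `X` an `A`–`B`
Hilbert bimodule.  Then the `C(A,ι)`–`C(B,ζ)` Hilbert bimodule `C(X, ι, ζ)` is
right-full (respectively, left-full) if and only if `X` is; in particular `C(X, ι, ζ)`
is an imprimitivity bimodule if and only if `X` is.  (Right-fullness of `C(X, ι, ζ)`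
means that the closed span of its `C(B,ζ)`-valued inner products is all of `C(B,ζ)`,
and similarly on the left.) -/
theorem bimodRelComm_full_iff
    {K A B X MX : Type*} [NonUnitalCStarAlgebra K] [NonUnitalCStarAlgebra A]
    [NonUnitalCStarAlgebra B] [NormedAddCommGroup X] [NormedSpace ℂ X] [CompleteSpace X]
    [NormedAddCommGroup MX] [NormedSpace ℂ MX]
    (hK : IsCompactOperatorsAlgebra K)
    (ι : K →⋆ₙₐ[ℂ] 𝓜(ℂ, A)) (hι : Nondegenerate ι)
    (ζ : K →⋆ₙₐ[ℂ] 𝓜(ℂ, B)) (hζ : Nondegenerate ζ)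
    (hX : HilbertBimodule A B X) (mX : MultiplierBimodule hX MX) :
    -- right-fullness passes back and forth
    (closure (Submodule.span ℂ {n : 𝓜(ℂ, B) | ∃ m ∈ bimodRelComm ι ζ mX,
        ∃ m' ∈ bimodRelComm ι ζ mX, n = mX.innerR m m'} : Set 𝓜(ℂ, B)) = relComm ζ ↔
      hX.RightFull) ∧
    -- left-fullness passes back and forth
    (closure (Submodule.span ℂ {n : 𝓜(ℂ, A) | ∃ m ∈ bimodRelComm ι ζ mX,
        ∃ m' ∈ bimodRelComm ι ζ mX, n = mX.innerL m m'} : Set 𝓜(ℂ, A)) = relComm ι ↔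
      hX.LeftFull) ∧
    -- in particular, `C(X, ι, ζ)` is an imprimitivity bimodule iff `X` is
    ((closure (Submodule.span ℂ {n : 𝓜(ℂ, B) | ∃ m ∈ bimodRelComm ι ζ mX,
        ∃ m' ∈ bimodRelComm ι ζ mX, n = mX.innerR m m'} : Set 𝓜(ℂ, B)) = relComm ζ ∧
      closure (Submodule.span ℂ {n : 𝓜(ℂ, A) | ∃ m ∈ bimodRelComm ι ζ mX,
        ∃ m' ∈ bimodRelComm ι ζ mX, n = mX.innerL m m'} : Set 𝓜(ℂ, A)) = relComm ι) ↔
      (hX.RightFull ∧ hX.LeftFull)) := by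
  obtain ⟨u⟩ := hK
  have hr := mX.right_full_iff u hι hζ
  have hl := mX.left_full_iff u hι hζ
  exact ⟨hr, hl, and_congr hr hl⟩
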